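/- arXiv:2205.00109 — 6 statements merged into one kernel-verified Lean document; each statement's English description precedes it below -/
import Mathlib

section
/- Suppose t ≥ 1, k > t, n ≥ 3(t+2)³k², and F ⊆ binom([n],k) is a t-intersecting family. Then |I(F)| ≤ |I(A(n,k,t))|. -/
open Finset

def ground (n : ℕ) : Finset ℕ := Finset.Icc 1 n

def ksets (n k : ℕ) : Finset (Finset ℕ) := (ground n).powersetCard k

def starF (n k : ℕ) (T : Finset ℕ) : Finset (Finset ℕ) :=
  (ksets n k).filter fun S => T ⊆ S

def meet (A B : Finset (Finset ℕ)) : Finset (Finset ℕ) :=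
  (A ×ˢ B).image fun p => p.1 ∩ p.2

def dInt (A B : Finset (Finset ℕ)) : Finset (Finset ℕ) :=
  ((A ×ˢ B).filter fun p => p.1 ≠ p.2).image fun p => p.1 ∩ p.2

def crossInt (A B : Finset (Finset ℕ)) : Prop :=
  ∀ F ∈ A, ∀ G ∈ B, (F ∩ G).Nonempty

open Classical in
noncomputable def nu (A : Finset (Finset ℕ)) : ℕ :=
  (A.powerset.filter fun M : Finset (Finset ℕ) =>
    (↑M : Set (Finset ℕ)).PairwiseDisjoint id).sup Finset.card

def transv (n k : ℕ) (H : Finset (Finset ℕ)) : Finset (Finset ℕ) :=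
  (ground n).powerset.filter fun T => T.card ≤ k ∧ ∀ h ∈ H, (T ∩ h).Nonempty

def basis (n k : ℕ) (H : Finset (Finset ℕ)) : Finset (Finset ℕ) :=
  (transv n k H).filter fun b => ∀ b' ∈ transv n k H, b' ⊆ b → b' = b

def tIntersecting (t : ℕ) (A : Finset (Finset ℕ)) : Prop :=
  ∀ F ∈ A, ∀ F' ∈ A, t ≤ (F ∩ F').card

def ttransv (n k t : ℕ) (H : Finset (Finset ℕ)) : Finset (Finset ℕ) :=
  (ground n).powerset.filter fun T => T.card ≤ k ∧ ∀ h ∈ H, t ≤ (T ∩ h).card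

def tbasis (n k t : ℕ) (H : Finset (Finset ℕ)) : Finset (Finset ℕ) :=
  (ttransv n k t H).filter fun b => ∀ b' ∈ ttransv n k t H, b' ⊆ b → b' = b

def crossSperner (A B : Finset (Finset ℕ)) : Prop :=
  ∀ a ∈ A, ∀ b ∈ B, ¬ a ⊆ b ∧ ¬ b ⊆ a

def A1 (n k : ℕ) : Finset (Finset ℕ) :=
  starF n k {1, 2} ∪ starF n k {3, 4} ∪ starF n k {1, 4, 5} ∪ starF n k {2, 3, 6}

def A2 (n k : ℕ) : Finset (Finset ℕ) :=
  starF n k {1, 3} ∪ starF n k {2, 4} ∪ starF n k {1, 4, 6} ∪ starF n k {2, 3, 5}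

def Ankt (n k t : ℕ) : Finset (Finset ℕ) :=
  (ksets n k).filter fun A => t + 1 ≤ (A ∩ ground (t + 2)).card

/-!
Call `T` a kernel of `F` if `T` is `t`-intersecting and every member of `F` contains a member of
`T`; a `t`-intersecting family is its own kernel. Shrinking members as long as possible makes a
kernel critical, and a branching argument then bounds the number of its members of maximal size
`t + d`. Discard these together with the sets of `F` that contain no smaller kernel member: every
lost intersection lies near a discarded kernel member `w`, in that it misses at most `d` points of
`w`, so for large `n` few intersections are lost. Once the kernel members have size at most
`t + 1`, either they share a `t`-set or each of them meets a suitable `(t + 2)`-set `Y` in at least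
`t + 1` points.

If `F` itself does not lie in the copy of `A(n, k, t)` based on some `Y`, then both alternatives
leave a single `t`-subset of `Y` that can be the trace of many intersections, whereas for
`A(n, k, t)` all `(t + 2).choose 2` of them are.
-/

/-! ### Binomial sums and numerical estimates -/

/-- The partial sum `∑ j < i, m.choose j`, i.e. the number of subsets with fewer than `i` elements
of an `m`-element set. -/
def binomSum (m i : ℕ) : ℕ := ∑ j ∈ range i, m.choose j

lemma binomSum_mono_left {m m' : ℕ} (h : m ≤ m') (i : ℕ) : binomSum m i ≤ binomSum m' i :=
  sum_le_sum fun j _ => Nat.choose_le_choose j h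

lemma binomSum_mono_right (m : ℕ) {i i' : ℕ} (h : i ≤ i') : binomSum m i ≤ binomSum m i' :=
  sum_le_sum_of_subset (range_mono h)

lemma binomSum_succ_succ (m i : ℕ) :
    binomSum (m + 1) (i + 1) = binomSum m i + binomSum m (i + 1) := by
  simp only [binomSum, sum_range_succ' _ i, Nat.choose_succ_succ', sum_add_distrib,
    Nat.choose_zero_right, add_assoc]

lemma binomSum_add_succ_le (t d : ℕ) :
    binomSum (t + (d + 1)) (d + 2) ≤ (t + 2) * binomSum (t + d) (d + 1) := by
  have hchoose : (t + d).choose (d + 1) ≤ t * (t + d).choose d := by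
    have h := Nat.choose_succ_right_eq (t + d) d
    rw [Nat.add_sub_cancel] at h
    nlinarith [Nat.zero_le ((t + d).choose (d + 1) * d)]
  have hterm : (t + d).choose d ≤ binomSum (t + d) (d + 1) :=
    single_le_sum (f := (t + d).choose) (fun _ _ => Nat.zero_le _) (self_mem_range_succ d)
  calc binomSum (t + (d + 1)) (d + 2)
      = binomSum (t + d) (d + 1) + (binomSum (t + d) (d + 1) + (t + d).choose (d + 1)) := by
        rw [← add_assoc, binomSum_succ_succ, binomSum, binomSum, sum_range_succ _ (d + 1)]
    _ ≤ binomSum (t + d) (d + 1)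
        + (binomSum (t + d) (d + 1) + t * binomSum (t + d) (d + 1)) := by
        gcongr
        exact hchoose.trans (Nat.mul_le_mul_left t hterm)
    _ = (t + 2) * binomSum (t + d) (d + 1) := by ring

lemma mul_binomSum_le {m q j : ℕ} (h : (q + 1) * j ≤ m) :
    q * binomSum m j ≤ binomSum m (j + 1) := by
  have hterm : ∀ i ∈ range j, q * m.choose i ≤ m.choose (i + 1) := by
    intro i hi
    have hq : q * (i + 1) ≤ m - i := by
      have := mem_range.1 hi
      have : (q + 1) * (i + 1) ≤ (q + 1) * j := Nat.mul_le_mul_left _ this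
      refine Nat.le_sub_of_add_le ?_
      linarith
    refine Nat.le_of_mul_le_mul_right (c := i + 1) ?_ (Nat.succ_pos i)
    calc q * m.choose i * (i + 1) = m.choose i * (q * (i + 1)) := by ring
      _ ≤ m.choose i * (m - i) := Nat.mul_le_mul_left _ hq
      _ = m.choose (i + 1) * (i + 1) := (Nat.choose_succ_right_eq m i).symm
  rw [binomSum, binomSum, sum_range_succ', mul_sum]
  exact (sum_le_sum hterm).trans (Nat.le_add_right _ _)

lemma pow_mul_binomSum_le {m q j : ℕ} (i : ℕ) (h : (q + 1) * (j + i) ≤ m) :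
    q ^ i * binomSum m j ≤ binomSum m (j + i) := by
  induction i with
  | zero => simp
  | succ i ih =>
    have hi : (q + 1) * (j + i) ≤ m := (Nat.mul_le_mul_left _ (by omega)).trans h
    calc q ^ (i + 1) * binomSum m j = q * (q ^ i * binomSum m j) := by ring
      _ ≤ q * binomSum m (j + i) := Nat.mul_le_mul_left _ (ih hi)
      _ ≤ binomSum m (j + (i + 1)) := mul_binomSum_le hi

lemma mul_sum_range_le_of_geometric {r M c : ℕ} {x : ℕ → ℕ}
    (hx : ∀ i < c, (r + 1) ^ (i + 1) * x i ≤ M) : r * ∑ i ∈ range c, x i ≤ M := by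
  -- The strengthened bound `r * ∑ i < c, x i ≤ M * (1 - (r + 1)⁻¹ ^ c)`, cleared of denominators.
  have key : (r + 1) ^ c * (r * ∑ i ∈ range c, x i) + M ≤ (r + 1) ^ c * M := by
    induction c with
    | zero => simp
    | succ c ih =>
      have hprev := ih fun i hi => hx i (by omega)
      have hlast := hx c (by omega)
      rw [sum_range_succ, pow_succ] at *
      nlinarith
  exact Nat.le_of_mul_le_mul_left ((Nat.le_add_right _ M).trans key) (by positivity)

lemma choose_two_mul_two (t : ℕ) : (t + 2).choose 2 * 2 = (t + 2) * (t + 1) := by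
  rw [← Nat.add_one_mul_choose_eq, Nat.choose_one_right]

lemma sum_Icc_choose_add_two (t : ℕ) :
    ∑ j ∈ Icc t (t + 2), (t + 2).choose j = (t + 2).choose 2 + (t + 2) + 1 := by
  rw [sum_Icc_succ_top (by omega), sum_Icc_succ_top (by omega), Icc_self, sum_singleton,
    Nat.choose_self, Nat.choose_succ_self_right, Nat.choose_symm_add]

lemma mul_sub_add_two_le_of_mul_sq_le {n k t : ℕ} (ht : 1 ≤ t) (hk : t < k)
    (hn : 3 * (t + 2) ^ 3 * k ^ 2 ≤ n) :
    (3 * (t + 2) ^ 3 * k + 1) * (k - t) + (t + 2) ≤ n := by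
  obtain ⟨c, rfl⟩ := Nat.exists_eq_add_of_lt hk
  rw [show t + c + 1 - t = c + 1 by omega]
  have hcube : 1 ≤ (t + 2) ^ 3 := Nat.one_le_pow _ _ (by omega)
  nlinarith [Nat.mul_le_mul hcube ht]

lemma two_mul_add_le_choose_two_mul {A B k t : ℕ} (ht : 1 ≤ t) (hk : 1 ≤ k)
    (hAB : 3 * (t + 2) ^ 3 * k * B ≤ A) :
    2 * (A + ((t + 2).choose 2 + (t + 2)) * ((k + 1) * B)) ≤ (t + 2).choose 2 * A := by
  have hQ := choose_two_mul_two t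
  have hQ3 : 3 ≤ (t + 2).choose 2 := by nlinarith
  have hcoeff : 2 * (((t + 2).choose 2 + (t + 2)) * (k + 1)) ≤ 3 * (t + 2) ^ 3 * k := by
    calc 2 * (((t + 2).choose 2 + (t + 2)) * (k + 1))
        = ((t + 2).choose 2 * 2 + 2 * (t + 2)) * (k + 1) := by ring
      _ ≤ (t + 2) ^ 3 * (k + 1) := by rw [hQ]; gcongr; nlinarith
      _ ≤ (t + 2) ^ 3 * (3 * k) := by gcongr; omega
      _ = 3 * (t + 2) ^ 3 * k := by ring
  nlinarith [Nat.mul_le_mul_right B hcoeff, Nat.mul_le_mul_right A hQ3]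

lemma succ_pow_self_le (n : ℕ) : (n + 1) ^ n ≤ 3 * n ^ n := by
  rcases n.eq_zero_or_pos with rfl | hn
  · simp
  have h : ((n : ℝ) + 1) ^ n ≤ 3 * (n : ℝ) ^ n :=
    calc ((n : ℝ) + 1) ^ n = (1 + (n : ℝ)⁻¹) ^ n * (n : ℝ) ^ n := by
          rw [← mul_pow]
          field_simp
      _ ≤ 3 * (n : ℝ) ^ n := by
          gcongr
          linarith [Real.one_add_inv_pow_le_exp (n := n), Real.exp_one_lt_d9]
  exact_mod_cast h

/-! ### Sets with a prescribed trace -/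

section Families

variable {α : Type*}

lemma card_filter_card_lt (U : Finset α) (i : ℕ) :
    #{X ∈ U.powerset | #X < i} = binomSum #U i := by
  rw [binomSum, card_eq_sum_card_fiberwise (f := card) (t := range i)
    (fun X hX => by simpa using (mem_filter.1 hX).2)]
  refine sum_congr rfl fun j hj => ?_
  rw [← card_powersetCard, powersetCard_eq_filter, filter_filter]
  congr 1
  exact filter_congr fun X _ => and_iff_right_of_imp fun h => h ▸ mem_range.1 hj

lemma sum_powerset_filter_le_card (f : ℕ → ℕ) (t : ℕ) (Y : Finset α) :
    ∑ y ∈ Y.powerset with t ≤ #y, f #y = ∑ j ∈ Icc t #Y, (#Y).choose j * f j := by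
  rw [sum_filter, sum_powerset_apply_card (fun j => if t ≤ j then f j else 0)]
  simp only [smul_eq_mul, mul_ite, mul_zero, ← sum_filter]
  congr 1
  ext j
  simp only [mem_filter, mem_range, mem_Icc]
  omega

lemma exists_disjoint_supersets {Z Z' U : Finset α} {e : ℕ} (hZ : Z ⊆ U) (hZ' : Z' ⊆ U)
    (hd : Disjoint Z Z') (hZe : #Z ≤ e) (hZe' : #Z' ≤ e) (hU : 2 * e ≤ #U) :
    ∃ E E', Z ⊆ E ∧ Z' ⊆ E' ∧ E ⊆ U ∧ E' ⊆ U ∧ Disjoint E E' ∧ #E = e ∧ #E' = e := by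
  classical
  obtain ⟨E, hZE, hE, hEe⟩ := exists_subsuperset_card_eq (subset_sdiff.2 ⟨hZ, hd⟩) hZe
    (by rw [card_sdiff_of_subset hZ']; omega)
  obtain ⟨hEU, hEZ'⟩ := subset_sdiff.1 hE
  obtain ⟨E', hZE', hE', hEe'⟩ := exists_subsuperset_card_eq
    (subset_sdiff.2 ⟨hZ', hEZ'.symm⟩) hZe' (by rw [card_sdiff_of_subset hEU]; omega)
  obtain ⟨hEU', hEE'⟩ := subset_sdiff.1 hE'
  exact ⟨E, E', hZE, hZE', hEU, hEU', hEE'.symm, hEe, hEe'⟩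

variable [DecidableEq α] {V Y : Finset α} {d k s t : ℕ} {G T : Finset (Finset α)}

lemma card_inter_lt_of_ne {A B : Finset α} (hA : #A = k) (hB : #B = k) (hne : A ≠ B) :
    #(A ∩ B) < k := by
  by_contra! h
  have hAB : A ⊆ B := inter_eq_left.1 (eq_of_subset_of_card_le inter_subset_left (by omega))
  exact hne (eq_of_subset_of_card_le hAB (by omega))

/-- The subsets of `V` with trace `y` on `Y` and fewer than `k` elements. Families of intersections
are counted one such fiber at a time. -/
def traceFiber (V : Finset α) (k : ℕ) (Y y : Finset α) : Finset (Finset α) :=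
  {I ∈ V.powerset | I ∩ Y = y ∧ #I < k}

lemma mem_traceFiber {y I : Finset α} :
    I ∈ traceFiber V k Y y ↔ I ⊆ V ∧ I ∩ Y = y ∧ #I < k := by
  simp only [traceFiber, mem_filter, mem_powerset]

lemma card_traceFiber {y : Finset α} (hY : Y ⊆ V) (hy : y ⊆ Y) (k : ℕ) :
    #(traceFiber V k Y y) = binomSum (#V - #Y) (k - #y) := by
  rw [← card_sdiff_of_subset hY, ← card_filter_card_lt]
  refine card_nbij' (· \ Y) (· ∪ y) (fun I hI => ?_) (fun X hX => ?_) (fun I hI => ?_)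
    (fun X hX => ?_)
  · obtain ⟨hIV, rfl, hIk⟩ := mem_traceFiber.1 hI
    have := card_sdiff_add_card_inter I Y
    simp only [coe_filter, Set.mem_ofPred_eq, mem_powerset]
    exact ⟨sdiff_subset_sdiff hIV subset_rfl, by omega⟩
  · simp only [coe_filter, Set.mem_ofPred_eq, mem_powerset] at hX
    obtain ⟨hXV, hXY⟩ := subset_sdiff.1 hX.1
    have := card_union_le X y
    refine mem_traceFiber.2 ⟨union_subset hXV (hy.trans hY), ?_, by dsimp only; omega⟩
    rw [union_inter_distrib_right, disjoint_iff_inter_eq_empty.1 hXY, empty_union,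
      inter_eq_left.2 hy]
  · obtain ⟨-, rfl, -⟩ := mem_traceFiber.1 hI
    exact sdiff_union_inter I Y
  · simp only [coe_filter, Set.mem_ofPred_eq, mem_powerset] at hX
    dsimp only
    rw [union_sdiff_distrib, sdiff_eq_empty_iff_subset.2 hy, union_empty,
      sdiff_eq_self_of_disjoint (subset_sdiff.1 hX.1).2]

/-- The subsets of `V` with fewer than `k` elements, at least `t` of them in `Y`. For
`#Y = t + 2` this is the family of intersections of the copy of `A(n, k, t)` based on `Y`. -/
def meetingFamily (V : Finset α) (k t : ℕ) (Y : Finset α) : Finset (Finset α) :=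
  {I ∈ V.powerset | t ≤ #(I ∩ Y) ∧ #I < k}

lemma mem_meetingFamily {I : Finset α} :
    I ∈ meetingFamily V k t Y ↔ I ⊆ V ∧ t ≤ #(I ∩ Y) ∧ #I < k := by
  simp only [meetingFamily, mem_filter, mem_powerset]

lemma card_eq_sum_card_trace {H : Finset (Finset α)} (hH : H ⊆ meetingFamily V k t Y) :
    #H = ∑ y ∈ Y.powerset with t ≤ #y, #{I ∈ H | I ∩ Y = y} :=
  card_eq_sum_card_fiberwise fun _ hI =>
    mem_filter.2 ⟨mem_powerset.2 inter_subset_right, (mem_meetingFamily.1 (hH hI)).2.1⟩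

lemma filter_trace_subset_traceFiber {H : Finset (Finset α)} (hH : H ⊆ meetingFamily V k t Y)
    (y : Finset α) : {I ∈ H | I ∩ Y = y} ⊆ traceFiber V k Y y := by
  intro I hI
  obtain ⟨hIH, hIy⟩ := mem_filter.1 hI
  obtain ⟨hIV, -, hIk⟩ := mem_meetingFamily.1 (hH hIH)
  exact mem_traceFiber.2 ⟨hIV, hIy, hIk⟩

lemma card_meetingFamily (hY : Y ⊆ V) (k t : ℕ) :
    #(meetingFamily V k t Y)
      = ∑ j ∈ Icc t #Y, (#Y).choose j * binomSum (#V - #Y) (k - j) := by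
  rw [card_eq_sum_card_trace subset_rfl,
    ← sum_powerset_filter_le_card (fun j => binomSum (#V - #Y) (k - j))]
  refine sum_congr rfl fun y hy => ?_
  obtain ⟨hyY, hty⟩ := mem_filter.1 hy
  rw [← card_traceFiber hY (mem_powerset.1 hyY) k]
  congr 1
  refine (filter_trace_subset_traceFiber subset_rfl y).antisymm fun I hI => ?_
  obtain ⟨hIV, rfl, hIk⟩ := mem_traceFiber.1 hI
  exact mem_filter.2 ⟨mem_meetingFamily.2 ⟨hIV, hty, hIk⟩, rfl⟩

lemma choose_mul_binomSum_le_card_meetingFamily (hY : Y ⊆ V) (ht : t ≤ #Y) (k : ℕ) :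
    (#Y).choose t * binomSum (#V - #Y) (k - t) ≤ #(meetingFamily V k t Y) := by
  rw [card_meetingFamily hY]
  exact single_le_sum (f := fun j => (#Y).choose j * binomSum (#V - #Y) (k - j))
    (fun _ _ => Nat.zero_le _) (left_mem_Icc.2 ht)

lemma card_le_of_rare_traces {y₀ : Finset α} {B : ℕ} (hY : Y ⊆ V) (hy₀ : y₀ ⊆ Y)
    (hy₀t : #y₀ = t) {H : Finset (Finset α)} (hH : H ⊆ meetingFamily V k t Y)
    (hlarge : binomSum (#V - #Y) (k - (t + 1)) ≤ B)
    (hrare : ∀ y ⊆ Y, #y = t → y ≠ y₀ → #{I ∈ H | I ∩ Y = y} ≤ B) :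
    #H ≤ binomSum (#V - #Y) (k - t) + (∑ j ∈ Icc t #Y, (#Y).choose j - 1) * B := by
  have hfiber : ∀ y ⊆ Y, #{I ∈ H | I ∩ Y = y} ≤ binomSum (#V - #Y) (k - #y) := fun y hy =>
    (card_le_card (filter_trace_subset_traceFiber hH y)).trans (card_traceFiber hY hy k).le
  have hmem : y₀ ∈ Y.powerset.filter (t ≤ #·) := mem_filter.2 ⟨mem_powerset.2 hy₀, hy₀t.ge⟩
  have hcount : #{y ∈ Y.powerset | t ≤ #y} = ∑ j ∈ Icc t #Y, (#Y).choose j := by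
    simpa using sum_powerset_filter_le_card (fun _ => 1) t Y
  rw [card_eq_sum_card_trace hH, ← add_sum_erase _ _ hmem, ← hcount, ← card_erase_of_mem hmem,
    ← smul_eq_mul]
  refine Nat.add_le_add (hy₀t ▸ hfiber y₀ hy₀) (sum_le_card_nsmul _ _ _ fun y hy => ?_)
  obtain ⟨hne, hy⟩ := mem_erase.1 hy
  obtain ⟨hyY, hty⟩ := mem_filter.1 hy
  rw [mem_powerset] at hyY
  rcases hty.eq_or_lt with hty | hty
  · exact hrare y hyY hty.symm hne
  · exact (hfiber y hyY).trans ((binomSum_mono_right _ (Nat.sub_le_sub_left hty k)).trans hlarge)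

lemma card_le_of_rare_traces_of_card_eq {y₀ : Finset α} {H : Finset (Finset α)} (hY : Y ⊆ V)
    (hYt : #Y = t + 2) (hy₀ : y₀ ⊆ Y) (hy₀t : #y₀ = t) (hH : H ⊆ meetingFamily V k t Y)
    (hrare : ∀ y ⊆ Y, #y = t → y ≠ y₀ →
      #{I ∈ H | I ∩ Y = y} ≤ (k + 1) * binomSum (#V - #Y) (k - (t + 1))) :
    #H ≤ binomSum (#V - (t + 2)) (k - t)
      + ((t + 2).choose 2 + (t + 2)) * ((k + 1) * binomSum (#V - (t + 2)) (k - (t + 1))) := by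
  have h := card_le_of_rare_traces hY hy₀ hy₀t hH (Nat.le_mul_of_pos_left _ k.succ_pos) hrare
  rwa [hYt, sum_Icc_choose_add_two, Nat.add_sub_cancel] at h

lemma card_filter_traceFiber_le {S y : Finset α} (hY : Y ⊆ V) (hy : y ⊆ Y) (hS : S ⊆ V \ Y) :
    #{I ∈ traceFiber V k Y y | (∃ u ∈ S, u ∈ I) ∨ #I < k - 1}
      ≤ (#S + 1) * binomSum (#V - #Y) (k - (#y + 1)) := by
  have hcover : {I ∈ traceFiber V k Y y | (∃ u ∈ S, u ∈ I) ∨ #I < k - 1} ⊆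
      (S.biUnion fun u => traceFiber V k (insert u Y) (insert u y)) ∪
        traceFiber V (k - 1) Y y := by
    intro I hI
    obtain ⟨hI, h⟩ := mem_filter.1 hI
    obtain ⟨hIV, hIy, hIk⟩ := mem_traceFiber.1 hI
    refine mem_union.2 (h.imp ?_ fun h => mem_traceFiber.2 ⟨hIV, hIy, h⟩)
    rintro ⟨u, huS, huI⟩
    exact mem_biUnion.2 ⟨u, huS, mem_traceFiber.2
      ⟨hIV, by rw [inter_insert_of_mem huI, hIy], hIk⟩⟩
  have hpoint : ∀ u ∈ S, #(traceFiber V k (insert u Y) (insert u y))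
      ≤ binomSum (#V - #Y) (k - (#y + 1)) := by
    intro u hu
    obtain ⟨huV, huY⟩ := mem_sdiff.1 (hS hu)
    rw [card_traceFiber (insert_subset huV hY) (insert_subset_insert u hy),
      card_insert_of_notMem huY, card_insert_of_notMem fun h => huY (hy h)]
    exact binomSum_mono_left (by omega) _
  refine (card_le_card hcover).trans ((card_union_le _ _).trans ?_)
  rw [add_one_mul, card_traceFiber hY hy, Nat.sub_sub, add_comm 1]
  exact Nat.add_le_add_right (card_biUnion_le_card_mul _ _ _ hpoint) _

lemma exists_mem_sdiff_of_not_subset {P P₀ y₀ : Finset α} (hy₀ : P₀ ∩ Y ⊆ y₀)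
    (hPP₀ : #y₀ ≤ #(P ∩ P₀)) (hP : ¬ y₀ ⊆ P) : ∃ u ∈ P₀ \ Y, u ∈ P := by
  by_contra! h
  have hsub : P ∩ P₀ ⊆ y₀ := fun a ha => by
    obtain ⟨haP, haP₀⟩ := mem_inter.1 ha
    exact hy₀ (mem_inter.2 ⟨haP₀, by_contra fun haY => h a (mem_sdiff.2 ⟨haP₀, haY⟩) haP⟩)
  exact hP (eq_of_subset_of_card_le hsub hPP₀ ▸ inter_subset_left)

lemma exists_mem_inter_or_card_inter_lt {P P' S : Finset α} (hP : #P = k) (hS : Disjoint S Y)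
    (hPY : #(P ∩ P' ∩ Y) < #(P ∩ Y)) (hu : ∃ u ∈ S, u ∈ P) :
    (∃ u ∈ S, u ∈ P ∩ P') ∨ #(P ∩ P') < k - 1 := by
  obtain ⟨u, huS, huP⟩ := hu
  by_cases huP' : u ∈ P'
  · exact Or.inl ⟨u, huS, mem_inter.2 ⟨huP, huP'⟩⟩
  have hss : (P ∩ P') \ Y ⊂ P \ Y := by
    refine (sdiff_subset_sdiff inter_subset_left subset_rfl).ssubset_of_mem_notMem
      (mem_sdiff.2 ⟨huP, disjoint_left.1 hS huS⟩) fun h => huP' ?_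
    exact (mem_inter.1 (mem_sdiff.1 h).1).2
  have hlt := card_lt_card hss
  have hP' := card_sdiff_add_card_inter P Y
  have hI := card_sdiff_add_card_inter (P ∩ P') Y
  omega

/-! ### Kernels -/

lemma exists_hitting_set {X g : Finset α} (hg : #g ≤ t + d) (hX : #(X ∩ g) < t) :
    ∃ D ⊆ g \ X, #D ≤ d + 1 ∧ ∀ w, t ≤ #(w ∩ g) → (w ∩ D).Nonempty := by
  obtain ⟨D, hD, hDc⟩ := exists_subset_card_eq (min_le_right (d + 1) #(g \ X))
  refine ⟨D, hD, by omega, fun w hw => nonempty_iff_ne_empty.2 fun hwD => ?_⟩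
  have hsub : w ∩ g ⊆ (X ∩ g) ∪ ((g \ X) \ D) := by
    intro a ha
    have haD : a ∉ w ∩ D := hwD ▸ notMem_empty a
    simp only [mem_inter, mem_union, mem_sdiff] at ha haD ⊢
    tauto
  have hle := (card_le_card hsub).trans (card_union_le _ _)
  have hsplit := card_inter_add_card_sdiff g X
  rw [inter_comm] at hsplit
  rw [card_sdiff_of_subset hD] at hle
  omega

/-- No member of `T` can be replaced by a proper subset without destroying the `t`-intersection
property. Here `T` plays the role of the family of minimal `t`-transversals. -/
def IsCritical (t : ℕ) (T : Finset (Finset α)) : Prop :=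
  ∀ w ∈ T, ∀ x ⊂ w, ∃ g ∈ T, #(x ∩ g) < t

-- A set `X` too small to be a member is extended by one of the `d + 1` points of a hitting set.
lemma IsCritical.card_filter_superset_le (hcrit : IsCritical t T) (hcard : ∀ g ∈ T, #g ≤ t + d)
    (hint : ∀ w ∈ T, ∀ g ∈ T, t ≤ #(w ∩ g)) (i : ℕ) (X : Finset α) (hX : #X + i = t + d) :
    #{w ∈ T | #w = t + d ∧ X ⊆ w} ≤ (d + 1) ^ i := by
  induction i generalizing X with
  | zero =>
    have heq : ∀ w ∈ T.filter (fun w => #w = t + d ∧ X ⊆ w), X = w := fun w hw =>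
      eq_of_subset_of_card_le (mem_filter.1 hw).2.2 (by rw [(mem_filter.1 hw).2.1]; omega)
    exact card_le_one.2 fun w hw w' hw' => (heq w hw).symm.trans (heq w' hw')
  | succ i ih =>
    rcases (T.filter fun w => #w = t + d ∧ X ⊆ w).eq_empty_or_nonempty with h0 | ⟨w₀, hw₀⟩
    · simp [h0]
    obtain ⟨hw₀, hw₀c, hXw₀⟩ := mem_filter.1 hw₀
    have hss : X ⊂ w₀ := hXw₀.ssubset_of_ne fun h => by rw [← h] at hw₀c; omega
    obtain ⟨g, hg, hXg⟩ := hcrit w₀ hw₀ X hss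
    obtain ⟨D, hD, hDc, hhit⟩ := exists_hitting_set (hcard g hg) hXg
    have hcover : {w ∈ T | #w = t + d ∧ X ⊆ w} ⊆
        D.biUnion fun u => {w ∈ T | #w = t + d ∧ insert u X ⊆ w} := by
      intro w hw
      obtain ⟨hw, hwc, hXw⟩ := mem_filter.1 hw
      obtain ⟨u, hu⟩ := hhit w (hint w hw g hg)
      obtain ⟨huw, huD⟩ := mem_inter.1 hu
      exact mem_biUnion.2 ⟨u, huD, mem_filter.2 ⟨hw, hwc, insert_subset huw hXw⟩⟩
    calc #{w ∈ T | #w = t + d ∧ X ⊆ w}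
        ≤ #D * (d + 1) ^ i := by
          refine (card_le_card hcover).trans (card_biUnion_le_card_mul _ _ _ fun u hu => ih _ ?_)
          rw [card_insert_of_notMem (mem_sdiff.1 (hD hu)).2]
          omega
      _ ≤ (d + 1) * (d + 1) ^ i := Nat.mul_le_mul_right _ hDc
      _ = (d + 1) ^ (i + 1) := (pow_succ' _ _).symm

lemma IsCritical.card_filter_card_eq_le (hcrit : IsCritical t T) (hcard : ∀ g ∈ T, #g ≤ t + d)
    (hint : ∀ w ∈ T, ∀ g ∈ T, t ≤ #(w ∩ g)) :
    #{w ∈ T | #w = t + d} ≤ (t + d).choose d * (d + 1) ^ d := by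
  rcases (T.filter (#· = t + d)).eq_empty_or_nonempty with h0 | ⟨g, hg⟩
  · simp [h0]
  obtain ⟨hg, hgc⟩ := mem_filter.1 hg
  have hcover : {w ∈ T | #w = t + d} ⊆
      (powersetCard t g).biUnion fun X => {w ∈ T | #w = t + d ∧ X ⊆ w} := by
    intro w hw
    obtain ⟨hw, hwc⟩ := mem_filter.1 hw
    obtain ⟨X, hX, hXc⟩ := exists_subset_card_eq (hint w hw g hg)
    exact mem_biUnion.2 ⟨X, mem_powersetCard.2 ⟨hX.trans inter_subset_right, hXc⟩,
      mem_filter.2 ⟨hw, hwc, hX.trans inter_subset_left⟩⟩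
  calc #{w ∈ T | #w = t + d}
      ≤ #(powersetCard t g) * (d + 1) ^ d :=
        (card_le_card hcover).trans (card_biUnion_le_card_mul _ _ _ fun X hX =>
          hcrit.card_filter_superset_le hcard hint d X (by rw [(mem_powersetCard.1 hX).2]))
    _ = (t + d).choose d * (d + 1) ^ d := by rw [card_powersetCard, hgc, Nat.choose_symm_add]

/-- The members of `G` that contain a member of `T`: what is left of `G` when its kernel is replaced
by a subfamily `T`. -/
def covered (T G : Finset (Finset α)) : Finset (Finset α) := {P ∈ G | ∃ w ∈ T, w ⊆ P}

/-- A kernel of `G`: a `t`-intersecting family `T` of subsets of `V` with at most `s` elements such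
that every member of `G` contains a member of `T`. It generalizes the basis formed by the minimal
`t`-transversals of `G`. -/
structure IsKernel (V : Finset α) (t s : ℕ) (G T : Finset (Finset α)) : Prop where
  subset : ∀ w ∈ T, w ⊆ V
  card_le : ∀ w ∈ T, #w ≤ s
  inter : ∀ w ∈ T, ∀ g ∈ T, t ≤ #(w ∩ g)
  cover : ∀ P ∈ G, ∃ w ∈ T, w ⊆ P

lemma IsKernel.filter_card_le (hT : IsKernel V t s G T) (s' : ℕ) :
    IsKernel V t s' (covered {w ∈ T | #w ≤ s'} G) {w ∈ T | #w ≤ s'} where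
  subset _ hw := hT.subset _ (mem_filter.1 hw).1
  card_le _ hw := (mem_filter.1 hw).2
  inter _ hw _ hg := hT.inter _ (mem_filter.1 hw).1 _ (mem_filter.1 hg).1
  cover _ hP := (mem_filter.1 hP).2

lemma IsKernel.insert_erase (hT : IsKernel V t s G T) {w x : Finset α} (hw : w ∈ T)
    (hxw : x ⊆ w) (hx : ∀ g ∈ T, t ≤ #(x ∩ g)) : IsKernel V t s G (insert x (T.erase w)) where
  subset := forall_mem_insert _ _ _ |>.2
    ⟨hxw.trans (hT.subset w hw), fun v hv => hT.subset v (mem_of_mem_erase hv)⟩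
  card_le := forall_mem_insert _ _ _ |>.2
    ⟨(card_le_card hxw).trans (hT.card_le w hw), fun v hv => hT.card_le v (mem_of_mem_erase hv)⟩
  inter := by
    have hxx : t ≤ #(x ∩ x) := by simpa [inter_eq_left.2 hxw] using hx w hw
    have herase : ∀ g ∈ T.erase w, t ≤ #(x ∩ g) := fun g hg => hx g (mem_of_mem_erase hg)
    refine forall_mem_insert _ _ _ |>.2 ⟨forall_mem_insert _ _ _ |>.2 ⟨hxx, herase⟩,
      fun v hv => forall_mem_insert _ _ _ |>.2 ⟨inter_comm x v ▸ herase v hv, fun g hg => ?_⟩⟩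
    exact hT.inter v (mem_of_mem_erase hv) g (mem_of_mem_erase hg)
  cover P hP := by
    obtain ⟨v, hv, hvP⟩ := hT.cover P hP
    by_cases h : v = w
    · exact ⟨x, mem_insert_self _ _, hxw.trans (h ▸ hvP)⟩
    · exact ⟨v, mem_insert_of_mem (mem_erase.2 ⟨h, hv⟩), hvP⟩

lemma IsKernel.exists_isCritical (hT : IsKernel V t s G T) :
    ∃ T', IsKernel V t s G T' ∧ IsCritical t T' := by
  obtain ⟨T', hT', hmin⟩ := exists_minimalFor_of_wellFoundedLT (IsKernel V t s G)
    (fun T => ∑ w ∈ T, #w) ⟨T, hT⟩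
  refine ⟨T', hT', fun w hw x hxw => ?_⟩
  by_contra! hx
  have hdecrease : ∑ v ∈ insert x (T'.erase w), #v < ∑ v ∈ T', #v :=
    calc ∑ v ∈ insert x (T'.erase w), #v ≤ #x + ∑ v ∈ T'.erase w, #v := by
          rw [insert_eq, ← sum_singleton card x, ← sum_union_inter]
          exact Nat.le_add_right _ _
      _ < #w + ∑ v ∈ T'.erase w, #v := Nat.add_lt_add_right (card_lt_card hxw) _
      _ = ∑ v ∈ T', #v := add_sum_erase _ _ hw
  exact hdecrease.not_ge (hmin (hT'.insert_erase hw hxw.subset hx) hdecrease.le)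

/-- The subsets of `V` that miss fewer than `a` elements of `w` and have fewer than `b` elements
outside `w`. Discarding `w` from a kernel only costs intersections in such a family. -/
def nearFamily (V w : Finset α) (a b : ℕ) : Finset (Finset α) :=
  {I ∈ V.powerset | #(w \ I) < a ∧ #(I \ w) < b}

lemma card_nearFamily_le {w : Finset α} (hw : w ⊆ V) (a b : ℕ) :
    #(nearFamily V w a b) ≤ binomSum #w a * binomSum (#V - #w) b := by
  rw [← card_sdiff_of_subset hw, ← card_filter_card_lt, ← card_filter_card_lt, ← card_product]
  refine card_le_card_of_injOn (fun I => (w \ I, I \ w)) (fun I hI => ?_) fun I _ I' _ h => ?_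
  · obtain ⟨hIV, hwI, hIw⟩ := mem_filter.1 hI
    exact mem_product.2 ⟨mem_filter.2 ⟨mem_powerset.2 sdiff_subset, hwI⟩,
      mem_filter.2 ⟨mem_powerset.2 (sdiff_subset_sdiff (mem_powerset.1 hIV) subset_rfl), hIw⟩⟩
  · obtain ⟨hin, hout⟩ := Prod.mk.inj h
    ext a
    have hin := Finset.ext_iff.1 hin a
    have hout := Finset.ext_iff.1 hout a
    simp only [mem_sdiff] at hin hout
    tauto

lemma inter_mem_nearFamily {w g P P' : Finset α} (hP : P ∈ V.powersetCard k)
    (hwP : w ⊆ P) (hgP' : g ⊆ P') (hw : #w = t + d) (hwg : t ≤ #(w ∩ g)) :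
    P ∩ P' ∈ nearFamily V w (d + 1) (k - (t + d) + 1) := by
  obtain ⟨hPV, hPk⟩ := mem_powersetCard.1 hP
  refine mem_filter.2 ⟨mem_powerset.2 (inter_subset_left.trans hPV), ?_, ?_⟩
  · have hle := hwg.trans (card_le_card (inter_subset_inter_left hgP'))
    have hsplit := card_sdiff_add_card_inter w P'
    rw [sdiff_inter_distrib_right, sdiff_eq_empty_iff_subset.2 hwP, empty_union]
    omega
  · have hle := card_le_card (sdiff_subset_sdiff (inter_subset_left : P ∩ P' ⊆ P) (subset_refl w))
    rw [card_sdiff_of_subset hwP] at hle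
    omega

/-! ### Kernels with members of size at most `t + 1` -/

lemma inter_subset_or_subset_union {a b w : Finset α} (hw : #w ≤ t + 1)
    (hab : #(a ∩ b) ≤ t) (hwa : t ≤ #(w ∩ a)) (hwb : t ≤ #(w ∩ b)) :
    a ∩ b ⊆ w ∨ w ⊆ a ∪ b := by
  rw [or_iff_not_imp_left]
  intro hnot
  have hsmall : #(w ∩ (a ∩ b)) < t := by
    refine lt_of_lt_of_le (card_lt_card ?_) hab
    exact inter_subset_right.ssubset_of_ne fun h => hnot (inter_eq_right.1 h)
  have hincl := card_union_add_card_inter (w ∩ a) (w ∩ b)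
  rw [← inter_union_distrib_left, ← inter_inter_distrib_left] at hincl
  exact inter_eq_left.1 (eq_of_subset_of_card_le inter_subset_left (by omega))

lemma exists_forall_subset_union_of_uniform (hcard : ∀ w ∈ T, #w = t + 1)
    (hint : ∀ w ∈ T, ∀ g ∈ T, t ≤ #(w ∩ g))
    (hno : ∀ w ∈ T, ∀ C ⊆ w, #C = t → ∃ g ∈ T, ¬ C ⊆ g) {w₁ : Finset α} (hw₁ : w₁ ∈ T) :
    ∃ w₂ ∈ T, #(w₁ ∪ w₂) = t + 2 ∧ ∀ w ∈ T, w ⊆ w₁ ∪ w₂ := by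
  have hinter : ∀ w ∈ T, ∀ g ∈ T, w ≠ g → #(w ∩ g) = t := fun w hw g hg hne =>
    (Nat.lt_succ_iff.1 (card_inter_lt_of_ne (hcard w hw) (hcard g hg) hne)).antisymm
      (hint w hw g hg)
  have hor : ∀ a ∈ T, ∀ b ∈ T, a ≠ b → ∀ w ∈ T, a ∩ b ⊆ w ∨ w ⊆ a ∪ b :=
    fun a ha b hb hne w hw => inter_subset_or_subset_union (hcard w hw).le
      (hinter a ha b hb hne).le (hint w hw a ha) (hint w hw b hb)
  obtain ⟨C, hC, hCt⟩ := exists_subset_card_eq (by rw [hcard w₁ hw₁]; omega : t ≤ #w₁)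
  obtain ⟨w₂, hw₂, hCw₂⟩ := hno w₁ hw₁ C hC hCt
  have hne₂ : w₁ ≠ w₂ := fun h => hCw₂ (h ▸ hC)
  have hc₂ := hinter w₁ hw₁ w₂ hw₂ hne₂
  obtain ⟨w₃, hw₃, hw₁₂₃⟩ := hno w₁ hw₁ (w₁ ∩ w₂) inter_subset_left hc₂
  have hne₃ : w₁ ≠ w₃ := fun h => hw₁₂₃ (h ▸ inter_subset_left)
  have hw₃Y : w₃ ⊆ w₁ ∪ w₂ := (hor w₁ hw₁ w₂ hw₂ hne₂ w₃ hw₃).resolve_left hw₁₂₃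
  refine ⟨w₂, hw₂, ?_, fun w hw => by_contra fun hnot => ?_⟩
  · have := card_union_add_card_inter w₁ w₂
    have := hcard w₁ hw₁
    have := hcard w₂ hw₂
    omega
  -- `w` contains two distinct `t`-subsets of `w₁`, hence `w₁` itself.
  have h₂ : w₁ ∩ w₂ ⊆ w := (hor w₁ hw₁ w₂ hw₂ hne₂ w hw).resolve_right hnot
  have h₃ : w₁ ∩ w₃ ⊆ w := (hor w₁ hw₁ w₃ hw₃ hne₃ w hw).resolve_right fun h =>
    hnot (h.trans (union_subset subset_union_left hw₃Y))
  have hss : w₁ ∩ w₃ ⊂ w ∩ w₁ := by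
    refine (subset_inter h₃ inter_subset_left).ssubset_of_ne fun h => hw₁₂₃ ?_
    exact (subset_inter h₂ inter_subset_left).trans (h ▸ inter_subset_right)
  have hlt := card_lt_card hss
  rw [hinter w₁ hw₁ w₃ hw₃ hne₃] at hlt
  have hww₁ : w = w₁ := by_contra fun hne => hlt.ne' (hinter w hw w₁ hw₁ hne)
  exact hnot (hww₁ ▸ subset_union_left)

lemma exists_common_subset_or_superset (ht : t ≤ #V) (hTV : ∀ w ∈ T, w ⊆ V)
    (hcard : ∀ w ∈ T, #w ≤ t + 1) (hint : ∀ w ∈ T, ∀ g ∈ T, t ≤ #(w ∩ g)) :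
    (∃ C ⊆ V, #C = t ∧ ∀ w ∈ T, C ⊆ w) ∨ ∃ Y ⊆ V, #Y = t + 2 ∧ ∀ w ∈ T, t + 1 ≤ #(w ∩ Y) := by
  rw [or_iff_not_imp_left]
  intro hno
  push Not at hno
  obtain ⟨C, hCV, hCt⟩ := exists_subset_card_eq ht
  obtain ⟨w₁, hw₁, -⟩ := hno C hCV hCt
  have huniform : ∀ w ∈ T, #w = t + 1 := by
    refine fun w hw => (hcard w hw).antisymm (Nat.lt_of_not_le fun hle => ?_)
    have hinter : ∀ g ∈ T, w ∩ g = w := fun g hg =>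
      eq_of_subset_of_card_le inter_subset_left (hle.trans (hint w hw g hg))
    have hwt := hint w hw w hw
    rw [inter_self] at hwt
    obtain ⟨g, hg, hwg⟩ := hno w (hTV w hw) (hle.antisymm hwt)
    exact hwg (inter_eq_left.1 (hinter g hg))
  obtain ⟨w₂, hw₂, hY, hTY⟩ := exists_forall_subset_union_of_uniform huniform hint
    (fun w hw C hC => hno C (hC.trans (hTV w hw))) hw₁
  refine ⟨w₁ ∪ w₂, union_subset (hTV w₁ hw₁) (hTV w₂ hw₂), hY, fun w hw => ?_⟩
  rw [inter_eq_left.2 (hTY w hw), huniform w hw]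

end Families


/-! ### Intersections -/

section Intersections

variable {V Y : Finset ℕ} {k t : ℕ} {F G T : Finset (Finset ℕ)}

lemma card_ground (n : ℕ) : #(ground n) = n := by simp [ground]

lemma ground_mono {m n : ℕ} (h : m ≤ n) : ground m ⊆ ground n := Icc_subset_Icc_right h

lemma mem_dInt {A B : Finset (Finset ℕ)} {I : Finset ℕ} :
    I ∈ dInt A B ↔ ∃ P ∈ A, ∃ P' ∈ B, P ≠ P' ∧ P ∩ P' = I := by
  simp only [dInt, mem_image, mem_filter, mem_product, Prod.exists]
  grind

lemma subset_and_card_lt_of_mem_dInt (hG : G ⊆ V.powersetCard k) {I : Finset ℕ}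
    (hI : I ∈ dInt G G) : I ⊆ V ∧ #I < k := by
  obtain ⟨P, hP, P', hP', hne, rfl⟩ := mem_dInt.1 hI
  obtain ⟨hPV, hPk⟩ := mem_powersetCard.1 (hG hP)
  exact ⟨inter_subset_left.trans hPV,
    card_inter_lt_of_ne hPk (mem_powersetCard.1 (hG hP')).2 hne⟩

lemma dInt_subset_meetingFamily (hY : #Y = t + 2) (hG : G ⊆ V.powersetCard k)
    (hGY : ∀ P ∈ G, t + 1 ≤ #(P ∩ Y)) : dInt G G ⊆ meetingFamily V k t Y := by
  intro I hI
  obtain ⟨hIV, hIk⟩ := subset_and_card_lt_of_mem_dInt hG hI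
  obtain ⟨P, hP, P', hP', -, rfl⟩ := mem_dInt.1 hI
  refine mem_meetingFamily.2 ⟨hIV, ?_, hIk⟩
  have hincl := card_union_add_card_inter (P ∩ Y) (P' ∩ Y)
  have hunion : #((P ∩ Y) ∪ (P' ∩ Y)) ≤ #Y :=
    card_le_card (union_subset inter_subset_right inter_subset_right)
  have hPY := hGY P hP
  have hPY' := hGY P' hP'
  rw [← inter_inter_distrib_right] at hincl
  omega

lemma mem_dInt_of_disjoint_extensions {I E E' : Finset ℕ} (hI : I ∪ E ∈ G) (hI' : I ∪ E' ∈ G)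
    (hd : Disjoint E E') (hIE : Disjoint I E) (hE : E.Nonempty) : I ∈ dInt G G := by
  refine mem_dInt.2 ⟨_, hI, _, hI', fun h => ?_, ?_⟩
  · have hsub : E ⊆ I ∪ E' := h ▸ subset_union_right
    exact hE.ne_empty ((disjoint_union_right.2 ⟨hIE.symm, hd⟩).eq_bot_of_le hsub)
  · rw [← union_inter_distrib_left, disjoint_iff_inter_eq_empty.1 hd, union_empty]

-- `I` is the intersection of `I ∪ E` and `I ∪ E'`, where the disjoint sets `E` and `E'` each
-- contain a point of `Y` if `I` has only `t` of them.
lemma meetingFamily_subset_dInt (hYV : Y ⊆ V) (hY : #Y = t + 2) (hV : 2 * k ≤ #V) :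
    meetingFamily V k t Y ⊆ dInt {A ∈ V.powersetCard k | t + 1 ≤ #(A ∩ Y)}
      {A ∈ V.powersetCard k | t + 1 ≤ #(A ∩ Y)} := by
  intro I hI
  obtain ⟨hIV, hIt, hIk⟩ := mem_meetingFamily.1 hI
  have hYI : #(Y \ I) + #(I ∩ Y) = t + 2 := by
    rw [inter_comm, card_sdiff_add_card_inter, hY]
  have hVI : #(V \ I) = #V - #I := card_sdiff_of_subset hIV
  obtain ⟨Z, Z', -, -, hZ, hZ', hZZ', hZc, hZc'⟩ := exists_disjoint_supersets
    (e := t + 1 - #(I ∩ Y)) (empty_subset (Y \ I)) (empty_subset _) (disjoint_empty_left _)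
    (by simp) (by simp) (by omega)
  have hsub : Y \ I ⊆ V \ I := sdiff_subset_sdiff hYV subset_rfl
  obtain ⟨E, E', hZE, hZE', hE, hE', hd, hEc, hEc'⟩ := exists_disjoint_supersets
    (e := k - #I) (hZ.trans hsub) (hZ'.trans hsub) hZZ' (by omega) (by omega) (by omega)
  have hmem : ∀ Z E : Finset ℕ, Z ⊆ Y \ I → #Z = t + 1 - #(I ∩ Y) → Z ⊆ E → E ⊆ V \ I →
      #E = k - #I → I ∪ E ∈ (V.powersetCard k).filter fun A => t + 1 ≤ #(A ∩ Y) := by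
    intro Z E hZ hZc hZE hE hEc
    obtain ⟨hZY, hZI⟩ := subset_sdiff.1 hZ
    obtain ⟨hEV, hEI⟩ := subset_sdiff.1 hE
    refine mem_filter.2 ⟨mem_powersetCard.2 ⟨union_subset hIV hEV, ?_⟩, ?_⟩
    · rw [card_union_of_disjoint hEI.symm]
      omega
    · have hle : #((I ∩ Y) ∪ Z) ≤ #((I ∪ E) ∩ Y) := card_le_card <| union_subset
        (inter_subset_inter_right subset_union_left)
        (subset_inter (hZE.trans subset_union_right) hZY)
      rw [card_union_of_disjoint (hZI.symm.mono_left inter_subset_left)] at hle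
      omega
  exact mem_dInt_of_disjoint_extensions (hmem Z E hZ hZc hZE hE hEc)
    (hmem Z' E' hZ' hZc' hZE' hE' hEc') hd (subset_sdiff.1 hE).2.symm (card_pos.1 (by omega))

lemma card_dInt_le_of_forall_le_card_inter (hYV : Y ⊆ V) {Y' : Finset ℕ} (hYV' : Y' ⊆ V)
    (hY : #Y = t + 2) (hY' : #Y' = t + 2) (hV : 2 * k ≤ #V) (hF : F ⊆ V.powersetCard k)
    (hFY : ∀ P ∈ F, t + 1 ≤ #(P ∩ Y)) :
    #(dInt F F) ≤ #(dInt {A ∈ V.powersetCard k | t + 1 ≤ #(A ∩ Y')}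
      {A ∈ V.powersetCard k | t + 1 ≤ #(A ∩ Y')}) :=
  calc #(dInt F F) ≤ #(meetingFamily V k t Y) := card_le_card (dInt_subset_meetingFamily hY hF hFY)
    _ = #(meetingFamily V k t Y') := by
      rw [card_meetingFamily hYV, card_meetingFamily hYV', hY, hY']
    _ ≤ _ := card_le_card (meetingFamily_subset_dInt hYV' hY' hV)

lemma dInt_subset_union {G' N : Finset (Finset ℕ)}
    (hN : ∀ P ∈ G, P ∉ G' → ∀ P' ∈ G, P ∩ P' ∈ N) : dInt G G ⊆ dInt G' G' ∪ N := by
  intro I hI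
  obtain ⟨P, hP, P', hP', hne, rfl⟩ := mem_dInt.1 hI
  rw [mem_union, mem_dInt]
  by_cases hPG : P ∈ G'
  · by_cases hPG' : P' ∈ G'
    · exact Or.inl ⟨P, hPG, P', hPG', hne, rfl⟩
    · exact Or.inr (inter_comm P' P ▸ hN P' hP' hPG' P hP)
  · exact Or.inr (hN P hP hPG P' hP')

/-! ### Peeling off the large members of a kernel -/

/-- The number of members of size `t + d` of a critical kernel is at most the product of the first
two factors, and the last factor counts the traces on such a member that miss at most `d` of its
points. -/
def kernelWeight (t d : ℕ) : ℕ :=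
  (t + d).choose d * (d + 1) ^ d * binomSum (t + d) (d + 1)

lemma IsKernel.dInt_subset_union_biUnion_nearFamily {d : ℕ} (hG : G ⊆ V.powersetCard k)
    (hT : IsKernel V t (t + (d + 1)) G T) :
    dInt G G ⊆ dInt (covered {w ∈ T | #w ≤ t + d} G) (covered {w ∈ T | #w ≤ t + d} G) ∪
      {w ∈ T | #w = t + (d + 1)}.biUnion
        fun w => nearFamily V w (d + 2) (k - (t + (d + 1)) + 1) := by
  refine dInt_subset_union fun P hP hPG P' hP' => ?_
  obtain ⟨w, hw, hwP⟩ := hT.cover P hP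
  obtain ⟨g, hg, hgP'⟩ := hT.cover P' hP'
  have hwc : #w = t + (d + 1) := (hT.card_le w hw).antisymm <| Nat.lt_of_not_le fun hle =>
    hPG (mem_filter.2 ⟨hP, w, mem_filter.2 ⟨hw, hle⟩, hwP⟩)
  exact mem_biUnion.2 ⟨w, mem_filter.2 ⟨hw, hwc⟩,
    inter_mem_nearFamily (hG hP) hwP hgP' hwc (hT.inter w hw g hg)⟩

lemma IsKernel.exists_peel {d : ℕ} (hG : G ⊆ V.powersetCard k)
    (hT : IsKernel V t (t + (d + 1)) G T) :
    ∃ G' ⊆ G, ∃ T', IsKernel V t (t + d) G' T' ∧ #(dInt G G) ≤ #(dInt G' G')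
      + kernelWeight t (d + 1) * binomSum (#V - (t + (d + 1))) (k - (t + (d + 1)) + 1) := by
  obtain ⟨T, hT, hcrit⟩ := hT.exists_isCritical
  refine ⟨_, filter_subset _ _, _, hT.filter_card_le (t + d), ?_⟩
  refine (card_le_card (hT.dInt_subset_union_biUnion_nearFamily hG)).trans
    ((card_union_le _ _).trans (Nat.add_le_add_left ?_ _))
  calc _ ≤ #{w ∈ T | #w = t + (d + 1)} * (binomSum (t + (d + 1)) (d + 2)
          * binomSum (#V - (t + (d + 1))) (k - (t + (d + 1)) + 1)) := by
        refine card_biUnion_le_card_mul _ _ _ fun w hw => ?_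
        obtain ⟨hw, hwc⟩ := mem_filter.1 hw
        simpa only [hwc] using card_nearFamily_le (hT.subset w hw) _ _
    _ ≤ kernelWeight t (d + 1)
          * binomSum (#V - (t + (d + 1))) (k - (t + (d + 1)) + 1) := by
        rw [kernelWeight, ← mul_assoc]
        gcongr
        exact hcrit.card_filter_card_eq_le hT.card_le hT.inter

lemma IsKernel.exists_peel_to_succ (c : ℕ) (hG : G ⊆ V.powersetCard k) (hk : t + (c + 1) ≤ k)
    (hT : IsKernel V t (t + (c + 1)) G T) :
    ∃ G' ⊆ G, ∃ T', IsKernel V t (t + 1) G' T' ∧ #(dInt G G) ≤ #(dInt G' G')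
      + ∑ i ∈ range c, kernelWeight t (i + 2) * binomSum (#V - (t + 2)) (k - (t + (i + 1))) := by
  induction c generalizing G T with
  | zero => exact ⟨G, subset_rfl, T, hT, by simp⟩
  | succ c ih =>
    obtain ⟨G₁, hG₁, T₁, hT₁, hle₁⟩ := hT.exists_peel hG
    obtain ⟨G₂, hG₂, T₂, hT₂, hle₂⟩ := ih (hG₁.trans hG) (by omega) hT₁
    refine ⟨G₂, hG₂.trans hG₁, T₂, hT₂, ?_⟩
    rw [show k - (t + (c + 1 + 1)) + 1 = k - (t + (c + 1)) by omega] at hle₁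
    have hmono : binomSum (#V - (t + (c + 1 + 1))) (k - (t + (c + 1)))
        ≤ binomSum (#V - (t + 2)) (k - (t + (c + 1))) := binomSum_mono_left (by omega) _
    rw [sum_range_succ, ← add_assoc]
    exact hle₁.trans (Nat.add_le_add hle₂ (Nat.mul_le_mul_left _ hmono))

lemma kernelWeight_succ_le (t d : ℕ) :
    kernelWeight t (d + 1) ≤ (t + 2) ^ 3 * (t + (d + 1)) * kernelWeight t d := by
  have habsorb : (t + (d + 1)).choose (d + 1) * (d + 1) = (t + (d + 1)) * (t + d).choose d :=
    (Nat.add_one_mul_choose_eq (t + d) d).symm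
  have h3 : 3 ≤ (t + 2) ^ 2 := by nlinarith
  calc kernelWeight t (d + 1)
      ≤ (t + (d + 1)).choose (d + 1) * (3 * (d + 1) ^ (d + 1))
        * ((t + 2) * binomSum (t + d) (d + 1)) := by
        unfold kernelWeight
        gcongr
        · exact succ_pow_self_le (d + 1)
        · exact binomSum_add_succ_le t d
    _ = 3 * ((t + (d + 1)).choose (d + 1) * (d + 1)) * (d + 1) ^ d
        * ((t + 2) * binomSum (t + d) (d + 1)) := by ring
    _ ≤ (t + 2) ^ 2 * ((t + (d + 1)) * (t + d).choose d) * (d + 1) ^ d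
        * ((t + 2) * binomSum (t + d) (d + 1)) := by rw [habsorb]; gcongr
    _ = (t + 2) ^ 3 * (t + (d + 1)) * kernelWeight t d := by rw [kernelWeight]; ring

lemma kernelWeight_two_le (ht : 1 ≤ t) :
    kernelWeight t 2 ≤ (t + 2).choose 2 * ((t + 2) ^ 3 * (t + 2)) := by
  have hsum : binomSum (t + 2) 3 = 1 + (t + 2) + (t + 2).choose 2 := by
    simp [binomSum, sum_range_succ]
  have hpoly : 9 * (1 + (t + 2) + (t + 2).choose 2) ≤ (t + 2) ^ 3 * (t + 2) := by
    have h2 := choose_two_mul_two t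
    obtain ⟨a, rfl⟩ := Nat.exists_eq_add_of_le ht
    ring_nf at h2 ⊢
    nlinarith
  calc kernelWeight t 2 = (t + 2).choose 2 * (9 * (1 + (t + 2) + (t + 2).choose 2)) := by
        rw [kernelWeight, hsum]
        ring
    _ ≤ _ := Nat.mul_le_mul_left _ hpoly

lemma kernelWeight_add_two_le (ht : 1 ≤ t) (i : ℕ) :
    kernelWeight t (i + 2) ≤ (t + 2).choose 2 * ((t + 2) ^ 3 * (t + (i + 2))) ^ (i + 1) := by
  induction i with
  | zero => simpa using kernelWeight_two_le ht
  | succ i ih =>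
    calc kernelWeight t (i + 1 + 2)
        ≤ (t + 2) ^ 3 * (t + (i + 1 + 2)) * kernelWeight t (i + 2) := kernelWeight_succ_le t (i + 2)
      _ ≤ (t + 2) ^ 3 * (t + (i + 1 + 2))
          * ((t + 2).choose 2 * ((t + 2) ^ 3 * (t + (i + 1 + 2))) ^ (i + 1)) := by
        gcongr
        refine ih.trans ?_
        gcongr
        omega
      _ = (t + 2).choose 2 * ((t + 2) ^ 3 * (t + (i + 1 + 2))) ^ (i + 1 + 1) := by ring

lemma two_mul_sum_kernelWeight_le {c m : ℕ} (ht : 1 ≤ t) (hk : k = t + (c + 1))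
    (hm : (3 * (t + 2) ^ 3 * k + 1) * (c + 1) ≤ m) :
    2 * ∑ i ∈ range c, kernelWeight t (i + 2) * binomSum m (k - (t + (i + 1)))
      ≤ (t + 2).choose 2 * binomSum m (c + 1) := by
  refine mul_sum_range_le_of_geometric fun i hi => ?_
  have hci : k - (t + (i + 1)) + (i + 1) = c + 1 := by omega
  calc 3 ^ (i + 1) * (kernelWeight t (i + 2) * binomSum m (k - (t + (i + 1))))
      ≤ 3 ^ (i + 1) * ((t + 2).choose 2 * ((t + 2) ^ 3 * k) ^ (i + 1)
          * binomSum m (k - (t + (i + 1)))) := by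
        gcongr
        refine (kernelWeight_add_two_le ht i).trans ?_
        gcongr
        omega
    _ = (t + 2).choose 2
          * ((3 * (t + 2) ^ 3 * k) ^ (i + 1) * binomSum m (k - (t + (i + 1)))) := by
        rw [mul_assoc 3, mul_pow 3]
        ring
    _ ≤ (t + 2).choose 2 * binomSum m (c + 1) := by
        rw [← hci] at hm ⊢
        exact Nat.mul_le_mul_left _ (pow_mul_binomSum_le (i + 1) hm)

/-! ### Families with few frequent traces -/

-- If `P ∩ P'` has trace `y ≠ y₀`, then `P`, say, misses a point of `y₀`. It has to make up for this
-- by meeting `P₀` outside `Y`.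
lemma card_filter_dInt_trace_le {P₀ y₀ y : Finset ℕ} (hY : Y ⊆ V) (hG : G ⊆ V.powersetCard k)
    (hGY : ∀ P ∈ G, t + 1 ≤ #(P ∩ Y)) (hP₀ : P₀ ∈ V.powersetCard k)
    (hGP₀ : ∀ P ∈ G, t ≤ #(P ∩ P₀)) (hy₀ : P₀ ∩ Y ⊆ y₀) (hy₀Y : y₀ ⊆ Y)
    (hy₀t : #y₀ = t) (hy : y ⊆ Y) (hyt : #y = t) (hne : y ≠ y₀) :
    #{I ∈ dInt G G | I ∩ Y = y} ≤ (k + 1) * binomSum (#V - #Y) (k - (t + 1)) := by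
  obtain ⟨hP₀V, hP₀k⟩ := mem_powersetCard.1 hP₀
  have hmeet : ∀ P ∈ G, ∀ P', P ∩ P' ∩ Y = y → ¬ y₀ ⊆ P →
      (∃ u ∈ P₀ \ Y, u ∈ P ∩ P') ∨ #(P ∩ P') < k - 1 := fun P hP P' htrace hmiss =>
    exists_mem_inter_or_card_inter_lt (mem_powersetCard.1 (hG hP)).2 sdiff_disjoint
      (by rw [htrace, hyt]; exact hGY P hP)
      (exists_mem_sdiff_of_not_subset hy₀ (hy₀t ▸ hGP₀ P hP) hmiss)
  have hsub : {I ∈ dInt G G | I ∩ Y = y} ⊆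
      {I ∈ traceFiber V k Y y | (∃ u ∈ P₀ \ Y, u ∈ I) ∨ #I < k - 1} := by
    intro I hI
    obtain ⟨hI, htrace⟩ := mem_filter.1 hI
    obtain ⟨hIV, hIk⟩ := subset_and_card_lt_of_mem_dInt hG hI
    refine mem_filter.2 ⟨mem_traceFiber.2 ⟨hIV, htrace, hIk⟩, ?_⟩
    obtain ⟨P, hP, P', hP', -, rfl⟩ := mem_dInt.1 hI
    have hmiss : ¬ (y₀ ⊆ P ∧ y₀ ⊆ P') := fun h => hne <| Eq.symm <|
      eq_of_subset_of_card_le (htrace ▸ subset_inter (subset_inter h.1 h.2) hy₀Y) (by omega)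
    rcases not_and_or.1 hmiss with hmiss | hmiss
    · exact hmeet P hP P' htrace hmiss
    · rw [inter_comm P] at htrace ⊢
      exact hmeet P' hP' P htrace hmiss
  calc #{I ∈ dInt G G | I ∩ Y = y}
      ≤ (#(P₀ \ Y) + 1) * binomSum (#V - #Y) (k - (t + 1)) := hyt ▸
        (card_le_card hsub).trans
          (card_filter_traceFiber_le hY hy (sdiff_subset_sdiff hP₀V subset_rfl))
    _ ≤ (k + 1) * binomSum (#V - #Y) (k - (t + 1)) := by
      gcongr
      exact (card_le_card sdiff_subset).trans hP₀k.le

lemma card_dInt_le_of_common_subset {C : Finset ℕ} (hV : t + 2 ≤ #V) (hG : G ⊆ V.powersetCard k)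
    (hC : C ⊆ V) (hCt : #C = t) (hCG : ∀ P ∈ G, C ⊆ P) :
    #(dInt G G) ≤ binomSum (#V - (t + 2)) (k - t)
      + ((t + 2).choose 2 + (t + 2)) * ((k + 1) * binomSum (#V - (t + 2)) (k - (t + 1))) := by
  obtain ⟨Y, hCY, hY, hYt⟩ := exists_subsuperset_card_eq hC (by omega) hV
  have hCI : ∀ I ∈ dInt G G, C ⊆ I ∩ Y := by
    intro I hI
    obtain ⟨P, hP, P', hP', -, rfl⟩ := mem_dInt.1 hI
    exact subset_inter (subset_inter (hCG P hP) (hCG P' hP')) hCY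
  refine card_le_of_rare_traces_of_card_eq hY hYt hCY hCt (fun I hI => ?_) fun y _ hyt hne => ?_
  · obtain ⟨hIV, hIk⟩ := subset_and_card_lt_of_mem_dInt hG hI
    exact mem_meetingFamily.2 ⟨hIV, hCt ▸ card_le_card (hCI I hI), hIk⟩
  · rw [filter_false_of_mem fun I hI htrace => hne ?_, card_empty]
    · exact Nat.zero_le _
    · exact (eq_of_subset_of_card_le (htrace ▸ hCI I hI) (by omega)).symm

lemma card_dInt_le_of_exceptional {P₀ : Finset ℕ} (hG : G ⊆ V.powersetCard k) (hY : Y ⊆ V)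
    (hYt : #Y = t + 2) (hGY : ∀ P ∈ G, t + 1 ≤ #(P ∩ Y)) (hP₀ : P₀ ∈ V.powersetCard k)
    (hP₀Y : #(P₀ ∩ Y) ≤ t) (hGP₀ : ∀ P ∈ G, t ≤ #(P ∩ P₀)) :
    #(dInt G G) ≤ binomSum (#V - (t + 2)) (k - t)
      + ((t + 2).choose 2 + (t + 2)) * ((k + 1) * binomSum (#V - (t + 2)) (k - (t + 1))) := by
  obtain ⟨y₀, hy₀, hy₀Y, hy₀t⟩ :=
    exists_subsuperset_card_eq (inter_subset_right : P₀ ∩ Y ⊆ Y) hP₀Y (by omega)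
  exact card_le_of_rare_traces_of_card_eq hY hYt hy₀Y hy₀t (dInt_subset_meetingFamily hYt hG hGY)
    fun y hy hyt hne => card_filter_dInt_trace_le hY hG hGY hP₀ hGP₀ hy₀ hy₀Y hy₀t hy
      hyt hne

lemma IsKernel.card_dInt_le (hV : t + 2 ≤ #V) (hF : F ⊆ V.powersetCard k)
    (hint : tIntersecting t F) (hFY : ∀ Y ⊆ V, #Y = t + 2 → ∃ P ∈ F, #(P ∩ Y) ≤ t)
    (hG : G ⊆ F) (hT : IsKernel V t (t + 1) G T) :
    #(dInt G G) ≤ binomSum (#V - (t + 2)) (k - t)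
      + ((t + 2).choose 2 + (t + 2)) * ((k + 1) * binomSum (#V - (t + 2)) (k - (t + 1))) := by
  rcases exists_common_subset_or_superset (by omega) hT.subset hT.card_le hT.inter with
    ⟨C, hC, hCt, hCT⟩ | ⟨Y, hY, hYt, hTY⟩
  · refine card_dInt_le_of_common_subset hV (hG.trans hF) hC hCt fun P hP => ?_
    obtain ⟨w, hw, hwP⟩ := hT.cover P hP
    exact (hCT w hw).trans hwP
  · obtain ⟨P₀, hP₀, hP₀Y⟩ := hFY Y hY hYt
    refine card_dInt_le_of_exceptional (hG.trans hF) hY hYt (fun P hP => ?_) (hF hP₀) hP₀Y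
      fun P hP => hint P (hG hP) P₀ hP₀
    obtain ⟨w, hw, hwP⟩ := hT.cover P hP
    exact (hTY w hw).trans (card_le_card (inter_subset_inter_right hwP))

/-! ### Stability -/

lemma isKernel_self (hF : F ⊆ V.powersetCard k) (hint : tIntersecting t F) :
    IsKernel V t k F F where
  subset _ hw := (mem_powersetCard.1 (hF hw)).1
  card_le _ hw := (mem_powersetCard.1 (hF hw)).2.le
  inter := hint
  cover P hP := ⟨P, hP, subset_rfl⟩

lemma card_dInt_le_of_forall_exists_card_inter_le (ht : 1 ≤ t) (hk : t < k)
    (hV : 3 * (t + 2) ^ 3 * k ^ 2 ≤ #V) (hF : F ⊆ V.powersetCard k) (hint : tIntersecting t F)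
    (hFY : ∀ Y ⊆ V, #Y = t + 2 → ∃ P ∈ F, #(P ∩ Y) ≤ t) :
    #(dInt F F) ≤ (t + 2).choose 2 * binomSum (#V - (t + 2)) (k - t) := by
  obtain ⟨c, hc⟩ : ∃ c, k = t + (c + 1) := ⟨k - t - 1, by omega⟩
  have hkt : k - t = c + 1 := by omega
  have hsize := mul_sub_add_two_le_of_mul_sq_le ht hk hV
  have hm : (3 * (t + 2) ^ 3 * k + 1) * (c + 1) ≤ #V - (t + 2) := by rw [← hkt]; omega
  obtain ⟨G, hG, T, hT, hpeel⟩ :=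
    IsKernel.exists_peel_to_succ c hF hc.ge (hc ▸ isKernel_self hF hint)
  have hsum := two_mul_sum_kernelWeight_le ht hc hm
  have hkernel := hT.card_dInt_le (by omega) hF hint hFY hG
  have hAB : 3 * (t + 2) ^ 3 * k * binomSum (#V - (t + 2)) (k - (t + 1))
      ≤ binomSum (#V - (t + 2)) (k - t) := by
    rw [hkt, show k - (t + 1) = c by omega]
    exact mul_binomSum_le ((Nat.mul_le_mul_left _ c.le_succ).trans hm)
  have hmain := two_mul_add_le_choose_two_mul ht (by omega) hAB
  rw [← hkt] at hsum
  omega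

end Intersections

theorem stmt5 (n k t : ℕ) (ht : 1 ≤ t) (hk : t < k) (hn : 3 * (t + 2) ^ 3 * k ^ 2 ≤ n)
    (F : Finset (Finset ℕ)) (hF : F ⊆ ksets n k) (hint : tIntersecting t F) :
    (dInt F F).card ≤ (dInt (Ankt n k t) (Ankt n k t)).card := by
  have hn' : 3 * (t + 2) ^ 3 * k ^ 2 ≤ #(ground n) := by rwa [card_ground]
  have hsize := mul_sub_add_two_le_of_mul_sq_le ht hk hn'
  have h2k : 2 * k ≤ #(ground n) := by nlinarith [Nat.one_le_pow 3 (t + 2) (by omega)]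
  have hY₀ : ground (t + 2) ⊆ ground n := ground_mono (by rw [card_ground] at hsize; omega)
  have hY₀t : #(ground (t + 2)) = t + 2 := card_ground (t + 2)
  by_cases hFY : ∃ Y ⊆ ground n, #Y = t + 2 ∧ ∀ P ∈ F, t + 1 ≤ #(P ∩ Y)
  · obtain ⟨Y, hY, hYt, hFY⟩ := hFY
    exact card_dInt_le_of_forall_le_card_inter hY hY₀ hYt hY₀t h2k hF hFY
  · push Not at hFY
    calc #(dInt F F) ≤ (t + 2).choose 2 * binomSum (#(ground n) - (t + 2)) (k - t) :=
          card_dInt_le_of_forall_exists_card_inter_le ht hk hn' hF hint fun Y hY hYt =>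
            (hFY Y hY hYt).imp fun _ h => ⟨h.1, Nat.lt_succ_iff.1 h.2⟩
      _ ≤ #(meetingFamily (ground n) k t (ground (t + 2))) := by
          have h := choose_mul_binomSum_le_card_meetingFamily hY₀ (hY₀t ▸ t.le_add_right 2) k
          rwa [hY₀t, Nat.choose_symm_add] at h
      _ ≤ #(dInt (Ankt n k t) (Ankt n k t)) :=
          card_le_card (meetingFamily_subset_dInt hY₀ hY₀t h2k)
end

section
/- Let F, G ⊆ binom([n],k) be cross-intersecting families and set H = I(F, G) ∩ binom([n], k-1), i.e. the family of (k-1)-element sets of the form F ∩ G with F ∈ F, G ∈ G, F ≠ G. Then ν(H) ≤ 4; that is, H contains no 5 pairwise disjoint members. -/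
open Finset

/-
Let `H i`, for `i` in an index set of size `N + 1`, be pairwise disjoint sets of the form
`H i = F i ∩ G i`, where `F i = H i ∪ {x i}` and `G i = H i ∪ {y i}` with `x i ≠ y i`. For `i ≠ j`,
as `F i` meets `G j`, one has `x i ∈ H j`, `y j ∈ H i` or `x i = y j`. If a point `v` equals `x i`
for `a` indices, equals `y i` for `b` indices and lies in `m ≤ 1` of the sets `H i`, then it
accounts for at most `a * b + (a + b) * m` ordered pairs. No index is counted twice in `a + b + m`,
so `a + b + m ≤ N + 1`, whence AM-GM bounds this count by `(a + b) * (N + 4) / 4`, with equality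
only if `a + b` is `0` or `N`. Summing over `v`, where the numbers `a + b` add up to `2 * (N + 1)`,
gives `(N + 1) * N ≤ (N + 1) * (N + 4) / 2`, that is `N ≤ 4`. If `N = 4`, equality holds for every
`v`, which makes `10` a sum of multiples of `4`.
-/

open scoped Function

section Arithmetic

variable {a b m N : ℕ}

lemma four_mul_mul_add_mul_le (hm : m ≤ 1) (h : a + b + m ≤ N + 1) :
    4 * (a * b + (a + b) * m) ≤ (a + b) * (N + 4) :=
  calc 4 * (a * b + (a + b) * m)
    _ = 4 * a * b + (a + b) * (4 * m) := by ring
    _ ≤ (a + b) ^ 2 + (a + b) * (4 * m) := by gcongr; exact four_mul_le_sq_add a b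
    _ = (a + b) * (a + b + 4 * m) := by ring
    _ ≤ (a + b) * (N + 4) := Nat.mul_le_mul_left _ (by omega)

lemma dvd_add_of_four_mul_eq (hm : m ≤ 1) (h : a + b + m ≤ N + 1)
    (heq : 4 * (a * b + (a + b) * m) = (a + b) * (N + 4)) : N ∣ a + b := by
  obtain hab | hab := Nat.eq_zero_or_pos (a + b)
  · simp [hab]
  have hmul : (a + b) * (N + 4) ≤ (a + b) * (a + b + 4 * m) := by
    rw [← heq]
    linarith [four_mul_le_sq_add a b]
  have hle : N + 4 ≤ a + b + 4 * m := Nat.le_of_mul_le_mul_left hmul hab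
  have hN : a + b = N := by omega
  exact hN.symm.dvd

end Arithmetic

section Counting

variable {ι α : Type*} [Fintype ι] [DecidableEq α] {H : ι → Finset α} {x y : ι → α}

lemma card_filter_mem_le_one (hH : Pairwise (Disjoint on H)) (v : α) :
    #{i | v ∈ H i} ≤ 1 := by
  simp only [card_le_one, mem_filter, mem_univ, true_and]
  exact fun i hi j hj => by_contra fun hij => disjoint_left.mp (hH hij) hi hj

lemma card_fibers_add_card_filter_mem_le (hx : ∀ i, x i ∉ H i) (hy : ∀ i, y i ∉ H i)
    (hxy : ∀ i, x i ≠ y i) (v : α) :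
    #{i | x i = v} + #{i | y i = v} + #{i | v ∈ H i} ≤ Fintype.card ι := by
  classical
  have hdisj : Disjoint ({i | x i = v} : Finset ι) ({i | y i = v} : Finset ι) :=
    disjoint_filter.mpr fun i _ hxi hyi => hxy i (hxi.trans hyi.symm)
  have hdisj' : Disjoint (({i | x i = v} : Finset ι) ∪ ({i | y i = v} : Finset ι))
      ({i | v ∈ H i} : Finset ι) := by
    rw [disjoint_union_left]
    exact ⟨disjoint_filter.mpr fun i _ hxi => hxi ▸ hx i,
      disjoint_filter.mpr fun i _ hyi => hyi ▸ hy i⟩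
  rw [← card_union_of_disjoint hdisj, ← card_union_of_disjoint hdisj']
  exact card_le_univ _

lemma sum_card_fibers_add_card_fibers (x y : ι → α) :
    ∑ v ∈ univ.image x ∪ univ.image y, (#{i | x i = v} + #{i | y i = v}) =
      2 * Fintype.card ι := by
  have hx : ∑ v ∈ univ.image x ∪ univ.image y, #{i | x i = v} = Fintype.card ι :=
    (card_eq_sum_card_fiberwise fun i _ => by simp).symm
  have hy : ∑ v ∈ univ.image x ∪ univ.image y, #{i | y i = v} = Fintype.card ι :=
    (card_eq_sum_card_fiberwise fun i _ => by simp).symm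
  rw [sum_add_distrib, hx, hy, two_mul]

lemma card_mul_card_sub_one_le_sum
    (hcov : Pairwise fun i j => x i ∈ H j ∨ y j ∈ H i ∨ x i = y j) :
    Fintype.card ι * (Fintype.card ι - 1) ≤ ∑ v ∈ univ.image x ∪ univ.image y,
      (#{i | x i = v} * #{i | y i = v} + (#{i | x i = v} + #{i | y i = v}) * #{i | v ∈ H i}) := by
  classical
  let A (v : α) : Finset ι := {i | x i = v}
  let B (v : α) : Finset ι := {i | y i = v}
  let C (v : α) : Finset ι := {i | v ∈ H i}
  have hsub : (univ : Finset ι).offDiag ⊆ (univ.image x ∪ univ.image y).biUnion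
      fun v => A v ×ˢ B v ∪ (A v ×ˢ C v ∪ C v ×ˢ B v) := by
    rintro ⟨i, j⟩ hij
    simp only [mem_offDiag, mem_univ, true_and] at hij
    simp only [A, B, C, mem_biUnion, mem_union, mem_product, mem_filter, mem_image, mem_univ,
      true_and]
    obtain hxj | hyi | hxy := hcov hij
    · exact ⟨x i, .inl ⟨i, rfl⟩, .inr (.inl ⟨rfl, hxj⟩)⟩
    · exact ⟨y j, .inr ⟨j, rfl⟩, .inr (.inr ⟨hyi, rfl⟩)⟩
    · exact ⟨x i, .inl ⟨i, rfl⟩, .inl ⟨rfl, hxy.symm⟩⟩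
  calc Fintype.card ι * (Fintype.card ι - 1)
    _ = #(univ : Finset ι).offDiag := by rw [offDiag_card, card_univ, Nat.mul_sub_one]
    _ ≤ _ := card_le_card hsub
    _ ≤ ∑ v ∈ univ.image x ∪ univ.image y, #(A v ×ˢ B v ∪ (A v ×ˢ C v ∪ C v ×ˢ B v)) :=
      card_biUnion_le
    _ ≤ ∑ v ∈ univ.image x ∪ univ.image y, (#(A v) * #(B v) + (#(A v) + #(B v)) * #(C v)) := by
      refine sum_le_sum fun v _ => ?_
      rw [add_mul, mul_comm #(B v) #(C v)]
      simp only [← card_product]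
      exact (card_union_le _ _).trans (Nat.add_le_add_left (card_union_le _ _) _)

end Counting

lemma card_le_four_of_pairwise_mem_or_mem_or_eq {ι α : Type*} [Fintype ι] {H : ι → Finset α}
    {x y : ι → α} (hH : Pairwise (Disjoint on H)) (hx : ∀ i, x i ∉ H i) (hy : ∀ i, y i ∉ H i)
    (hxy : ∀ i, x i ≠ y i) (hcov : Pairwise fun i j => x i ∈ H j ∨ y j ∈ H i ∨ x i = y j) :
    Fintype.card ι ≤ 4 := by
  classical
  by_contra! hcard
  obtain ⟨N, hN⟩ : ∃ N, Fintype.card ι = N + 1 := Nat.exists_eq_add_one.mpr (by omega)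
  let V := univ.image x ∪ univ.image y
  let d (v : α) : ℕ := #{i | x i = v} + #{i | y i = v}
  let c (v : α) : ℕ := #{i | x i = v} * #{i | y i = v} + d v * #{i | v ∈ H i}
  have hm := card_filter_mem_le_one hH
  have hd_add (v : α) : d v + #{i | v ∈ H i} ≤ N + 1 :=
    hN ▸ card_fibers_add_card_filter_mem_le hx hy hxy v
  have hle : ∀ v ∈ V, 4 * c v ≤ d v * (N + 4) := fun v _ =>
    four_mul_mul_add_mul_le (hm v) (hd_add v)
  have hd : ∑ v ∈ V, d v = 2 * (N + 1) := hN ▸ sum_card_fibers_add_card_fibers x y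
  have hc : (N + 1) * N ≤ ∑ v ∈ V, c v := by
    simpa only [hN, Nat.add_sub_cancel] using card_mul_card_sub_one_le_sum hcov
  have hlower : 4 * ((N + 1) * N) ≤ ∑ v ∈ V, 4 * c v :=
    (Nat.mul_le_mul_left 4 hc).trans_eq (mul_sum ..)
  have hupper : ∑ v ∈ V, d v * (N + 4) = 2 * (N + 1) * (N + 4) := by rw [← sum_mul, hd]
  obtain rfl : N = 4 := by nlinarith [hlower.trans ((sum_le_sum hle).trans_eq hupper)]
  have heq : ∀ v ∈ V, 4 * c v = d v * (4 + 4) :=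
    (sum_eq_sum_iff_of_le hle).mp ((sum_le_sum hle).antisymm (hupper.trans_le hlower))
  have hdvd : 4 ∣ ∑ v ∈ V, d v := dvd_sum fun v hv =>
    dvd_add_of_four_mul_eq (hm v) (hd_add v) (heq v hv)
  omega

section CrossIntersecting

variable {α : Type*} [DecidableEq α]

lemma mem_or_mem_or_eq_of_insert_inter_insert_nonempty {s t : Finset α} {a b : α}
    (hst : Disjoint s t) (h : (insert a s ∩ insert b t).Nonempty) : a ∈ t ∨ b ∈ s ∨ a = b := by
  by_contra! hab
  refine not_disjoint_iff_nonempty_inter.mpr h ?_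
  simp [hst, hab, eq_comm]

theorem stmt8_general {F G : Set (Finset α)} (hcross : ∀ S ∈ F, ∀ T ∈ G, (S ∩ T).Nonempty)
    {M : Finset (Finset α)} (hM : (M : Set (Finset α)).PairwiseDisjoint id)
    (hcov : ∀ I ∈ M, ∃ S ∈ F, ∃ T ∈ G, S ≠ T ∧ I ⋖ S ∧ I ⋖ T) : #M ≤ 4 := by
  have hext (I : M) : ∃ x y, x ∉ I.1 ∧ y ∉ I.1 ∧ x ≠ y ∧ insert x I.1 ∈ F ∧ insert y I.1 ∈ G := by
    obtain ⟨S, hS, T, hT, hST, hIS, hIT⟩ := hcov I I.2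
    obtain ⟨x, hx, rfl⟩ := hIS.exists_finset_insert
    obtain ⟨y, hy, rfl⟩ := hIT.exists_finset_insert
    exact ⟨x, y, hx, hy, fun hxy => hST (hxy ▸ rfl), hS, hT⟩
  choose x y hx hy hxy hxF hyG using hext
  have hdisj : Pairwise (Disjoint on fun I : M => I.1) := fun I J hIJ =>
    hM I.2 J.2 (Subtype.coe_ne_coe.mpr hIJ)
  rw [← Fintype.card_coe]
  exact card_le_four_of_pairwise_mem_or_mem_or_eq hdisj hx hy hxy fun I J hIJ =>
    mem_or_mem_or_eq_of_insert_inter_insert_nonempty (hdisj hIJ) (hcross _ (hxF I) _ (hyG J))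

lemma inter_covBy_left_of_card_inter {S T : Finset α} (hST : S ≠ T) (hcard : #S = #T)
    (hI : #(S ∩ T) = #S - 1) : S ∩ T ⋖ S := by
  have hne : S ∩ T ≠ S := fun h => hST (eq_of_subset_of_card_le (inter_eq_left.mp h) hcard.ge)
  have hlt : #(S ∩ T) < #S := card_lt_card (inter_subset_left.ssubset_of_ne hne)
  rw [covBy_iff_card_sdiff_eq_one, card_sdiff_of_subset inter_subset_left]
  exact ⟨inter_subset_left, by omega⟩

end CrossIntersecting

lemma nu_le_iff {A : Finset (Finset ℕ)} {m : ℕ} :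
    nu A ≤ m ↔ ∀ M ⊆ A, (M : Set (Finset ℕ)).PairwiseDisjoint id → #M ≤ m := by
  simp only [nu, Finset.sup_le_iff, mem_filter, mem_powerset, and_imp]

lemma exists_covBy_of_mem_dInt {n k : ℕ} {F G : Finset (Finset ℕ)} (hF : F ⊆ ksets n k)
    (hG : G ⊆ ksets n k) {I : Finset ℕ} (hI : I ∈ dInt F G ∩ ksets n (k - 1)) :
    ∃ S ∈ F, ∃ T ∈ G, S ≠ T ∧ I ⋖ S ∧ I ⋖ T := by
  simp only [dInt, mem_inter, mem_image, mem_filter, mem_product, Prod.exists] at hI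
  obtain ⟨⟨S, T, ⟨⟨hS, hT⟩, hST⟩, rfl⟩, hk⟩ := hI
  have hSk : #S = k := (mem_powersetCard.mp (hF hS)).2
  have hTk : #T = k := (mem_powersetCard.mp (hG hT)).2
  have hIk : #(S ∩ T) = k - 1 := (mem_powersetCard.mp hk).2
  refine ⟨S, hS, T, hT, hST, ?_, ?_⟩
  · exact inter_covBy_left_of_card_inter hST (hSk.trans hTk.symm) (hSk.symm ▸ hIk)
  · rw [inter_comm] at hIk ⊢
    exact inter_covBy_left_of_card_inter hST.symm (hTk.trans hSk.symm) (hTk.symm ▸ hIk)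

theorem stmt8 (n k : ℕ)
    (F G : Finset (Finset ℕ)) (hF : F ⊆ ksets n k) (hG : G ⊆ ksets n k)
    (hcross : crossInt F G) :
    nu (dInt F G ∩ ksets n (k - 1)) ≤ 4 :=
  nu_le_iff.mpr fun _ hM hdisj =>
    stmt8_general hcross hdisj fun _ hI => exists_covBy_of_mem_dInt hF hG (hM hI)
end

section
/- Suppose n ≥ 2k and F, G ⊆ binom([n],k) are nonempty saturated cross-intersecting families. Let B(F) be the family of minimal (under inclusion) members of T(G) and B(G) the family of minimal members of T(F). Then: (i) B(F) and B(G) are antichains, and B(F), B(G) are cross-intersecting; (ii) F = {F ∈ binom([n],k) : ∃ B ∈ B(F), B ⊆ F} and G = {G ∈ binom([n],k) : ∃ B ∈ B(G), B ⊆ G}. -/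
open Finset

/-!
Let `V` be the ground set, `𝒜` the `k`-uniform and `ℬ` the `l`-uniform family, where
`k + l ≤ |V|`. Saturation says that `𝒜` consists of exactly those `k`-sets that meet every member
of `ℬ`, and symmetrically. So `𝒜` consists of the `k`-sets that contain some transversal of `ℬ`,
hence of those that contain a minimal one. If `b` and `c` were disjoint transversals of `ℬ` and of
`𝒜`, with `|b| ≤ k` and `|c| ≤ l`, there would be enough room outside `c` to enlarge `b` to a
`k`-set `S` disjoint from `c`; being a transversal of `ℬ`, this `S` would belong to `𝒜`, although
`c` meets every member of `𝒜`.
-/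

section General

variable {α : Type*} {V : Set α} {k l : ℕ} {S T b c : Finset α} {𝒜 ℬ ℋ : Set (Finset α)}

/-- The `k`-element subsets of `V`, where `V` may be infinite. -/
def sizedSubsets (V : Set α) (k : ℕ) : Set (Finset α) :=
  {S | ↑S ⊆ V ∧ #S = k}

/-- `T` is a transversal of `ℋ`: it meets every member of `ℋ`. No bound on the size of `T` is
imposed here. -/
def IsTransversal (ℋ : Set (Finset α)) (T : Finset α) : Prop :=
  ∀ H ∈ ℋ, ¬Disjoint T H

/-- Cross-intersecting families: every member of one meets every member of the other. -/
def CrossIntersecting (𝒜 ℬ : Set (Finset α)) : Prop :=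
  ∀ A ∈ 𝒜, IsTransversal ℬ A

/-- The transversal family `T(ℋ)` inside the ground set `V`, with size bound `k`. -/
def transversals (V : Set α) (k : ℕ) (ℋ : Set (Finset α)) : Set (Finset α) :=
  {T | ↑T ⊆ V ∧ #T ≤ k ∧ IsTransversal ℋ T}

/-- The inclusion-minimal members of the transversal family `T(ℋ)`. For a saturated pair `(𝒜, ℬ)`
this is the generating family `B(𝒜)` when `ℋ = ℬ`. -/
def minimalTransversals (V : Set α) (k : ℕ) (ℋ : Set (Finset α)) : Set (Finset α) :=
  {b | Minimal (· ∈ transversals V k ℋ) b}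

/-- Saturated cross-intersecting pairs of a `k`-uniform and an `l`-uniform family on `V`: the
cross-intersecting pairs that are maximal for componentwise inclusion. -/
def IsSaturatedPair (V : Set α) (k l : ℕ) (𝒜 ℬ : Set (Finset α)) : Prop :=
  Maximal (fun P : Set (Finset α) × Set (Finset α) =>
    P.1 ⊆ sizedSubsets V k ∧ P.2 ⊆ sizedSubsets V l ∧ CrossIntersecting P.1 P.2) (𝒜, ℬ)

theorem IsTransversal.mono (hS : IsTransversal ℋ S) (hST : S ⊆ T) : IsTransversal ℋ T :=
  fun H hH hTH => hS H hH (hTH.mono_left hST)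

theorem CrossIntersecting.symm (h : CrossIntersecting 𝒜 ℬ) : CrossIntersecting ℬ 𝒜 :=
  fun B hB A hA hBA => h A hA B hB hBA.symm

theorem IsSaturatedPair.symm (h : IsSaturatedPair V k l 𝒜 ℬ) : IsSaturatedPair V l k ℬ 𝒜 := by
  obtain ⟨⟨h𝒜, hℬ, hcross⟩, hmax⟩ := h
  exact ⟨⟨hℬ, h𝒜, hcross.symm⟩, fun P ⟨h₁, h₂, h₁₂⟩ hle =>
    (hmax (y := P.swap) ⟨h₂, h₁, h₁₂.symm⟩ hle.symm).symm⟩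

theorem IsSaturatedPair.mem_left_iff (h : IsSaturatedPair V k l 𝒜 ℬ) :
    S ∈ 𝒜 ↔ S ∈ sizedSubsets V k ∧ IsTransversal ℬ S := by
  obtain ⟨⟨h𝒜, hℬ, hcross⟩, hmax⟩ := h
  refine ⟨fun hS => ⟨h𝒜 hS, hcross S hS⟩, fun ⟨hS, hSℬ⟩ => ?_⟩
  have hinsert : CrossIntersecting (insert S 𝒜) ℬ := Set.forall_mem_insert.2 ⟨hSℬ, hcross⟩
  exact (hmax (y := (insert S 𝒜, ℬ)) ⟨Set.insert_subset hS h𝒜, hℬ, hinsert⟩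
    ⟨Set.subset_insert S 𝒜, subset_rfl⟩).1 (Set.mem_insert S 𝒜)

theorem exists_mem_minimalTransversals_subset (hT : T ∈ transversals V k ℋ) :
    ∃ b ∈ minimalTransversals V k ℋ, b ⊆ T := by
  obtain ⟨b, hbT, hb⟩ := exists_minimal_le_of_wellFoundedLT (· ∈ transversals V k ℋ) T hT
  exact ⟨b, hb, hbT⟩

theorem IsSaturatedPair.left_eq_setOf_minimalTransversals_subset
    (h : IsSaturatedPair V k l 𝒜 ℬ) :
    𝒜 = {S ∈ sizedSubsets V k | ∃ b ∈ minimalTransversals V k ℬ, b ⊆ S} := by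
  ext S
  rw [h.mem_left_iff]
  refine and_congr_right fun ⟨hSV, hSk⟩ => ⟨fun hS => ?_, fun ⟨b, hb, hbS⟩ => ?_⟩
  · exact exists_mem_minimalTransversals_subset ⟨hSV, hSk.le, hS⟩
  · exact hb.prop.2.2.mono hbS

theorem exists_superset_mem_sizedSubsets_disjoint (hbV : ↑b ⊆ V) (hbk : #b ≤ k)
    (hbc : Disjoint b c) (hV : (k + #c : ℕ∞) ≤ V.encard) :
    ∃ S ∈ sizedSubsets V k, b ⊆ S ∧ Disjoint S c := by
  have hroom : (k : ℕ∞) ≤ (V \ c).encard := by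
    rw [← Set.encard_coe_eq_coe_finsetCard] at hV
    exact (ENat.add_le_add_iff_right (Set.encard_ne_top_iff.2 c.finite_toSet)).1
      (hV.trans (Set.encard_le_encard_sdiff_add_encard V c))
  obtain ⟨R, hbR, hRc, hRk⟩ := Set.exists_superset_subset_encard_eq
    (Set.subset_sdiff.2 ⟨hbV, disjoint_coe.2 hbc⟩)
    (by rw [Set.encard_coe_eq_coe_finsetCard]; exact_mod_cast hbk) hroom
  lift R to Finset α using Set.finite_of_encard_eq_coe hRk
  rw [Set.encard_coe_eq_coe_finsetCard, Nat.cast_inj] at hRk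
  obtain ⟨hRV, hRdisj⟩ := Set.subset_sdiff.1 hRc
  exact ⟨R, ⟨hRV, hRk⟩, coe_subset.1 hbR, disjoint_coe.1 hRdisj⟩

theorem IsSaturatedPair.crossIntersecting_transversals (h : IsSaturatedPair V k l 𝒜 ℬ)
    (hV : (k + l : ℕ∞) ≤ V.encard) :
    CrossIntersecting (transversals V k ℬ) (transversals V l 𝒜) := by
  rintro b ⟨hbV, hbk, hb⟩ c ⟨-, hcl, hc⟩ hbc
  have hroom : (k + #c : ℕ∞) ≤ V.encard := le_trans (by gcongr) hV
  obtain ⟨S, hS, hbS, hSc⟩ := exists_superset_mem_sizedSubsets_disjoint hbV hbk hbc hroom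
  have hS𝒜 : S ∈ 𝒜 := h.mem_left_iff.2 ⟨hS, hb.mono hbS⟩
  exact hc S hS𝒜 hSc.symm

theorem stmt10_general {α : Type*} {V : Set α} {k l : ℕ} {𝒜 ℬ : Set (Finset α)}
    (hV : (k + l : ℕ∞) ≤ V.encard) (h : IsSaturatedPair V k l 𝒜 ℬ) :
    (IsAntichain (· ⊆ ·) (minimalTransversals V k ℬ) ∧
     IsAntichain (· ⊆ ·) (minimalTransversals V l 𝒜) ∧
     CrossIntersecting (minimalTransversals V k ℬ) (minimalTransversals V l 𝒜)) ∧
    𝒜 = {S ∈ sizedSubsets V k | ∃ b ∈ minimalTransversals V k ℬ, b ⊆ S} ∧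
    ℬ = {S ∈ sizedSubsets V l | ∃ b ∈ minimalTransversals V l 𝒜, b ⊆ S} :=
  ⟨⟨setOfPred_minimal_antichain _, setOfPred_minimal_antichain _, fun b hb c hc =>
      h.crossIntersecting_transversals hV b hb.prop c hc.prop⟩,
    h.left_eq_setOf_minimalTransversals_subset,
    h.symm.left_eq_setOf_minimalTransversals_subset⟩

end General

section Ground

variable {n k : ℕ} {F G : Finset (Finset ℕ)}

theorem encard_coe_ground (n : ℕ) : (ground n : Set ℕ).encard = n := by
  rw [Set.encard_coe_eq_coe_finsetCard, ground, Nat.card_Icc, Nat.add_sub_cancel]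

theorem coe_ksets (n k : ℕ) : (ksets n k : Set (Finset ℕ)) = sizedSubsets (ground n) k := by
  ext S
  simp only [ksets, sizedSubsets, mem_coe, mem_powersetCard, Set.mem_ofPred_eq, coe_subset]

theorem coe_transv (n k : ℕ) (H : Finset (Finset ℕ)) :
    (transv n k H : Set (Finset ℕ)) = transversals (ground n) k H := by
  ext T
  simp only [transv, transversals, IsTransversal, mem_coe, mem_filter, mem_powerset,
    Set.mem_ofPred_eq, coe_subset, not_disjoint_iff_nonempty_inter]

theorem coe_basis (n k : ℕ) (H : Finset (Finset ℕ)) :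
    (basis n k H : Set (Finset ℕ)) = minimalTransversals (ground n) k H := by
  ext b
  simp only [basis, minimalTransversals, ← coe_transv, mem_coe, mem_filter, Set.mem_ofPred_eq,
    minimal_iff, eq_comm (a := b)]

theorem crossInt_iff_crossIntersecting :
    crossInt F G ↔ CrossIntersecting (F : Set (Finset ℕ)) (G : Set (Finset ℕ)) := by
  simp only [crossInt, CrossIntersecting, IsTransversal, mem_coe, not_disjoint_iff_nonempty_inter]

theorem isSaturatedPair_coe (hF : F ⊆ ksets n k) (hG : G ⊆ ksets n k) (hcross : crossInt F G)
    (hsat : ∀ F' G' : Finset (Finset ℕ), F ⊆ F' → G ⊆ G' →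
      F' ⊆ ksets n k → G' ⊆ ksets n k → crossInt F' G' → F' = F ∧ G' = G) :
    IsSaturatedPair (ground n : Set ℕ) k k F G := by
  simp only [IsSaturatedPair, ← coe_ksets]
  refine ⟨⟨hF, hG, crossInt_iff_crossIntersecting.1 hcross⟩, ?_⟩
  rintro ⟨𝒜, ℬ⟩ ⟨h𝒜, hℬ, h𝒜ℬ⟩ ⟨hF𝒜, hGℬ⟩
  lift 𝒜 to Finset (Finset ℕ) using (ksets n k).finite_toSet.subset h𝒜
  lift ℬ to Finset (Finset ℕ) using (ksets n k).finite_toSet.subset hℬ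
  obtain ⟨rfl, rfl⟩ := hsat 𝒜 ℬ (coe_subset.1 hF𝒜) (coe_subset.1 hGℬ) (coe_subset.1 h𝒜)
    (coe_subset.1 hℬ) (crossInt_iff_crossIntersecting.2 h𝒜ℬ)
  exact le_rfl

end Ground

theorem stmt10 (n k : ℕ) (hn : 2 * k ≤ n)
    (F G : Finset (Finset ℕ)) (hF : F ⊆ ksets n k) (hG : G ⊆ ksets n k)
    (hFne : F.Nonempty) (hGne : G.Nonempty) (hcross : crossInt F G)
    (hsat : ∀ F' G' : Finset (Finset ℕ), F ⊆ F' → G ⊆ G' →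
      F' ⊆ ksets n k → G' ⊆ ksets n k → crossInt F' G' → F' = F ∧ G' = G) :
    (IsAntichain (· ⊆ ·) ((basis n k G : Finset (Finset ℕ)) : Set (Finset ℕ)) ∧
     IsAntichain (· ⊆ ·) ((basis n k F : Finset (Finset ℕ)) : Set (Finset ℕ)) ∧
     crossInt (basis n k G) (basis n k F)) ∧
    (F = (ksets n k).filter fun S => ∃ b ∈ basis n k G, b ⊆ S) ∧
    (G = (ksets n k).filter fun S => ∃ b ∈ basis n k F, b ⊆ S) := by
  have hV : (k + k : ℕ∞) ≤ (ground n : Set ℕ).encard := by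
    rw [encard_coe_ground]; exact_mod_cast two_mul k ▸ hn
  simpa only [crossInt_iff_crossIntersecting, ← coe_inj, coe_filter, ← mem_coe, coe_ksets,
    coe_basis] using stmt10_general hV (isSaturatedPair_coe hF hG hcross hsat)
end

section
/- Suppose t ≥ 1, k > t, n ≥ 2k, and F ⊆ binom([n],k) is a nonempty saturated t-intersecting family. Let B be the family of minimal (under inclusion) members of T_t(F), and let B^{(t+1)} be the family of (t+1)-element members of B. If τ_t(B^{(t+1)}) ≥ t + 1, then there exists a (t+2)-element set T ⊆ [n] such that F = {A ∈ binom([n],k) : |A ∩ T| ≥ t+1}. -/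
open Finset

/-!
Let `V` be the ground set and `𝓑` the family of `t`-transversals of size `t + 1`. If `|V| ≥ k + 2`,
any two members of `𝓑` meet in at least `t` points: a `k`-set which contains the first and meets
the second as little as possible belongs to `F` by saturation, so the second meets it in at least
`t` points. As no `t`-set meets every member of `𝓑` in `t` points, there are `A, B, C ∈ 𝓑` with
`|A ∩ B| = t` and `|A ∩ B ∩ C| < t`. Counting inside `C` gives `C ⊆ A ∪ B`, and a set meeting each
of `A, B, C` in `t` points then meets the `(t + 2)`-set `A ∪ B` in at least `t + 1` points. So `F`
lies in the Frankl family of `A ∪ B`, which is itself `t`-intersecting, and saturation gives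
equality. If `|V| ≤ k + 1`, every `k`-subset of `V` lies in the Frankl family of any
`(t + 2)`-subset of `V`, and the union of two members of `𝓑` contains such a subset.
-/

variable {α : Type*} [DecidableEq α] {V T X A B C : Finset α} {F 𝓑 : Finset (Finset α)}
  {k r t : ℕ}

/-- Saturated `t`-intersecting families of `k`-subsets of `V`. Distinct members are required to
meet in at least `t` points; a member meets itself in `k` points, so for `t ≤ k` this is the usual
notion. -/
def IsSaturated (V : Finset α) (k t : ℕ) (F : Finset (Finset α)) : Prop :=
  Maximal (fun 𝒜 : Finset (Finset α) ↦
    𝒜 ⊆ V.powersetCard k ∧ Set.IsIntersectingOf (Set.Ici t) (𝒜 : Set (Finset α))) F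

/-- The family `T_t(F)` of `t`-transversals of `F`: the subsets of `V` of size at most `k` meeting
every member of `F` in at least `t` points. -/
def tTransversals (V : Finset α) (k t : ℕ) (F : Finset (Finset α)) : Finset (Finset α) :=
  {T ∈ V.powerset | #T ≤ k ∧ ∀ A ∈ F, t ≤ #(T ∩ A)}

/-- The `k`-subsets of `V` meeting `T` in at least `t + 1` points. These are the Frankl families
when `#T = t + 2`. -/
def franklFamily (V : Finset α) (k t : ℕ) (T : Finset α) : Finset (Finset α) :=
  {A ∈ V.powersetCard k | t + 1 ≤ #(A ∩ T)}

lemma card_inter_add_card_inter_le (X Y T : Finset α) :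
    #(X ∩ T) + #(Y ∩ T) ≤ #T + #(X ∩ Y) :=
  calc #(X ∩ T) + #(Y ∩ T)
      = #((X ∪ Y) ∩ T) + #(X ∩ Y ∩ T) := by
        rw [← card_union_add_card_inter, ← union_inter_distrib_right, ← inter_inter_distrib_right]
    _ ≤ #T + #(X ∩ Y) :=
        Nat.add_le_add (card_le_card inter_subset_right) (card_le_card inter_subset_left)

lemma subset_union_of_card_add_card_le (h : #C + #(A ∩ B ∩ C) ≤ #(A ∩ C) + #(B ∩ C)) :
    C ⊆ A ∪ B := by
  rw [← card_union_add_card_inter (A ∩ C), ← union_inter_distrib_right,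
    ← inter_inter_distrib_right, Nat.add_le_add_iff_right] at h
  exact inter_eq_right.1 (eq_of_subset_of_card_le inter_subset_right h)

lemma inter_subset_of_card_inter_le (hBT : B ⊆ T) (h : #(X ∩ T) ≤ #(X ∩ B)) : X ∩ T ⊆ B :=
  eq_of_subset_of_card_le (inter_subset_inter_left hBT) h ▸ inter_subset_right

lemma card_lt_card_union_of_ne (hcard : #A ≤ #B) (hne : A ≠ B) : #A < #(A ∪ B) :=
  card_lt_card <| subset_union_left.ssubset_of_ne fun h ↦
    hne (eq_of_subset_of_card_le (left_eq_union.1 h) hcard).symm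

lemma lt_card_inter_of_le_card_inter (hA : A ⊆ T) (hB : B ⊆ T) (hC : C ⊆ T)
    (hABC : #(A ∩ B ∩ C) < t) (hXA : t ≤ #(X ∩ A)) (hXB : t ≤ #(X ∩ B)) (hXC : t ≤ #(X ∩ C)) :
    t < #(X ∩ T) := by
  by_contra! hXT
  have hsub : X ∩ T ⊆ A ∩ B ∩ C :=
    subset_inter (subset_inter (inter_subset_of_card_inter_le hA (hXT.trans hXA))
      (inter_subset_of_card_inter_le hB (hXT.trans hXB)))
      (inter_subset_of_card_inter_le hC (hXT.trans hXC))
  have hlt : #(X ∩ T) < t := (card_le_card hsub).trans_lt hABC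
  exact hlt.not_ge (hXA.trans (card_le_card (inter_subset_inter_left hA)))

lemma exists_superset_card_eq_card_inter_le (hBV : B ⊆ V) (hCV : C ⊆ V) (hBk : #B ≤ k)
    (hkV : k ≤ #V) :
    ∃ A ⊆ V, B ⊆ A ∧ #A = k ∧ (#(A ∩ C) ≤ #(B ∩ C) ∨ #(A ∩ C) + #V ≤ #C + k) := by
  have hBW : B ⊆ V \ (C \ B) := subset_sdiff.2 ⟨hBV, disjoint_sdiff⟩
  rcases le_total k #(V \ (C \ B)) with hk | hk
  · obtain ⟨A, hBA, hAW, hAk⟩ := exists_subsuperset_card_eq hBW hBk hk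
    have hAC : A ∩ C ⊆ B ∩ C := by grind
    exact ⟨A, hAW.trans sdiff_subset, hBA, hAk, .inl (card_le_card hAC)⟩
  · obtain ⟨A, hWA, hAV, hAk⟩ := exists_subsuperset_card_eq sdiff_subset hk hkV
    refine ⟨A, hAV, hBW.trans hWA, hAk, .inr ?_⟩
    have hVC : V \ C ⊆ A \ C := by grind
    have hle := card_le_card hVC
    have hV := card_sdiff_add_card_eq_card hCV
    have hA := card_sdiff_add_card_inter A C
    omega

lemma le_card_inter_of_isIntersectingOf {𝒜 : Set (Finset α)} (hr : 𝒜.Sized r)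
    (h𝒜 : Set.IsIntersectingOf (Set.Ici t) 𝒜) (htr : t ≤ r) (hA : A ∈ 𝒜) (hB : B ∈ 𝒜) :
    t ≤ #(A ∩ B) := by
  obtain rfl | hne := eq_or_ne A B
  · rwa [inter_self, hr hA]
  · exact h𝒜 hA hB hne

lemma nontrivial_of_forall_cover_lt_card (hr : (𝓑 : Set (Finset α)).Sized (t + 1))
    (hV : ∀ B ∈ 𝓑, B ⊆ V)
    (hτ : ∀ T ⊆ V, (∀ B ∈ 𝓑, t ≤ #(T ∩ B)) → t + 1 ≤ #T) : 𝓑.Nontrivial := by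
  by_contra h
  obtain h𝓑 | ⟨B, h𝓑⟩ := (Set.not_nontrivial_iff.1 h).eq_empty_or_singleton
  · simpa [coe_eq_empty.1 h𝓑] using hτ ∅ (empty_subset V)
  · rw [coe_eq_singleton] at h𝓑
    subst h𝓑
    have hB : #B = t + 1 := hr (by simp)
    obtain ⟨T, hTB, hT⟩ := exists_subset_card_eq (show t ≤ #B by omega)
    have := hτ T (hTB.trans (hV B (by simp))) (by simp [inter_eq_left.2 hTB, hT])
    omega

lemma exists_subset_union_of_forall_cover_lt_card (hr : (𝓑 : Set (Finset α)).Sized (t + 1))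
    (hV : ∀ B ∈ 𝓑, B ⊆ V) (hint : Set.IsIntersectingOf (Set.Ici t) (𝓑 : Set (Finset α)))
    (hτ : ∀ T ⊆ V, (∀ B ∈ 𝓑, t ≤ #(T ∩ B)) → t + 1 ≤ #T) :
    ∃ A ∈ 𝓑, ∃ B ∈ 𝓑, ∃ C ∈ 𝓑, #(A ∪ B) = t + 2 ∧ C ⊆ A ∪ B ∧ #(A ∩ B ∩ C) < t := by
  obtain ⟨A, hA, B, hB, hne⟩ := nontrivial_of_forall_cover_lt_card hr hV hτ
  have hAcard : #A = t + 1 := hr hA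
  have hBcard : #B = t + 1 := hr hB
  have hlt : #A < #(A ∪ B) := card_lt_card_union_of_ne (hAcard.trans hBcard.symm).le hne
  have hle : t ≤ #(A ∩ B) := hint hA hB hne
  have hadd : #(A ∪ B) + #(A ∩ B) = #A + #B := card_union_add_card_inter A B
  obtain ⟨C, hC, hABC⟩ : ∃ C ∈ 𝓑, #(A ∩ B ∩ C) < t := by
    by_contra! h
    have := hτ (A ∩ B) (inter_subset_left.trans (hV A hA)) h
    omega
  have hCcard : #C = t + 1 := hr hC
  have hAC := le_card_inter_of_isIntersectingOf hr hint t.le_succ hA hC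
  have hBC := le_card_inter_of_isIntersectingOf hr hint t.le_succ hB hC
  exact ⟨A, hA, B, hB, C, hC, by omega, subset_union_of_card_add_card_le (by omega), hABC⟩

lemma isIntersectingOf_franklFamily (V : Finset α) (k : ℕ) (hT : #T ≤ t + 2) :
    Set.IsIntersectingOf (Set.Ici t) (franklFamily V k t T : Set (Finset α)) := by
  intro X hX Y hY _
  have hXT : t + 1 ≤ #(X ∩ T) := (mem_filter.1 hX).2
  have hYT : t + 1 ≤ #(Y ∩ T) := (mem_filter.1 hY).2
  have hXY := card_inter_add_card_inter_le X Y T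
  exact Set.mem_Ici.2 (by omega)

lemma powersetCard_subset_franklFamily (hTV : T ⊆ V) (h : #V + t + 1 ≤ k + #T) :
    V.powersetCard k ⊆ franklFamily V k t T := by
  intro A hA
  obtain ⟨hAV, hAk⟩ := mem_powersetCard.1 hA
  have hAT : #(A ∪ T) ≤ #V := card_le_card (union_subset hAV hTV)
  have hadd := card_union_add_card_inter A T
  exact mem_filter.2 ⟨hA, by omega⟩

lemma subset_franklFamily_of_mem_tTransversals (hF : F ⊆ V.powersetCard k)
    (hA : A ∈ tTransversals V k t F) (hB : B ∈ tTransversals V k t F)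
    (hC : C ∈ tTransversals V k t F) (hAT : A ⊆ T) (hBT : B ⊆ T) (hCT : C ⊆ T)
    (hABC : #(A ∩ B ∩ C) < t) : F ⊆ franklFamily V k t T := by
  have hmeet : ∀ X ∈ F, ∀ B ∈ tTransversals V k t F, t ≤ #(X ∩ B) := fun X hX B hB ↦
    inter_comm B X ▸ (mem_filter.1 hB).2.2 X hX
  exact fun X hX ↦ mem_filter.2 ⟨hF hX, lt_card_inter_of_le_card_inter hAT hBT hCT hABC
    (hmeet X hX A hA) (hmeet X hX B hB) (hmeet X hX C hC)⟩

namespace IsSaturated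

lemma mem_of_forall_le_card_inter (hF : IsSaturated V k t F) (hA : A ∈ V.powersetCard k)
    (h : ∀ B ∈ F, t ≤ #(A ∩ B)) : A ∈ F := by
  refine hF.2 ⟨insert_subset hA hF.1.1, ?_⟩ (subset_insert A F) (mem_insert_self A F)
  rw [coe_insert]
  exact hF.1.2.insert fun B hB _ ↦ ⟨h B hB, inter_comm A B ▸ h B hB⟩

lemma eq_franklFamily_of_subset (hF : IsSaturated V k t F) (hT : #T ≤ t + 2)
    (hsub : F ⊆ franklFamily V k t T) : F = franklFamily V k t T :=
  hsub.antisymm (hF.2 ⟨filter_subset _ _, isIntersectingOf_franklFamily V k hT⟩ hsub)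

lemma le_card_inter_of_mem_tTransversals (hF : IsSaturated V k t F)
    (hB : B ∈ tTransversals V k t F) (hC : C ∈ tTransversals V k t F) (hkV : k ≤ #V)
    (hCV : #C + k < t + #V) : t ≤ #(B ∩ C) := by
  simp only [tTransversals, mem_filter, mem_powerset] at hB hC
  obtain ⟨A, hAV, hBA, hAk, hAC⟩ := exists_superset_card_eq_card_inter_le hB.1 hC.1 hB.2.1 hkV
  have hAF : A ∈ F := hF.mem_of_forall_le_card_inter (mem_powersetCard.2 ⟨hAV, hAk⟩)
    fun X hX ↦ (hB.2.2 X hX).trans (card_le_card (inter_subset_inter_right hBA))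
  have hCA : t ≤ #(A ∩ C) := inter_comm C A ▸ hC.2.2 A hAF
  omega

lemma isIntersectingOf_slice_tTransversals (hF : IsSaturated V k t F) (hV : k + 2 ≤ #V) :
    Set.IsIntersectingOf (Set.Ici t) ((tTransversals V k t F).slice (t + 1) : Set (Finset α)) := by
  intro B hB C hC _
  obtain ⟨hC, hCt⟩ := mem_slice.1 hC
  exact hF.le_card_inter_of_mem_tTransversals (mem_slice.1 hB).1 hC (by omega) (by omega)

end IsSaturated

lemma isSaturated_of_tIntersecting {n : ℕ} {F : Finset (Finset ℕ)} (htk : t ≤ k)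
    (hF : F ⊆ ksets n k) (hint : tIntersecting t F)
    (hsat : ∀ F' : Finset (Finset ℕ), F ⊆ F' → F' ⊆ ksets n k → tIntersecting t F' → F' = F) :
    IsSaturated (ground n) k t F := by
  refine ⟨⟨hF, fun A hA B hB _ ↦ hint A hA B hB⟩, fun F' ⟨hF', hint'⟩ hle ↦ ?_⟩
  have hsized : (F' : Set (Finset ℕ)).Sized k := fun A hA ↦ (mem_powersetCard.1 (hF' hA)).2
  exact (hsat F' hle hF' fun A hA B hB ↦
    le_card_inter_of_isIntersectingOf hsized hint' htk hA hB).le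

theorem stmt16_general (hF : IsSaturated V k t F)
    (hτ : ∀ T ⊆ V, (∀ B ∈ (tTransversals V k t F).slice (t + 1), t ≤ #(T ∩ B)) → t + 1 ≤ #T) :
    ∃ T ⊆ V, #T = t + 2 ∧ F = franklFamily V k t T := by
  suffices ∃ T ⊆ V, #T = t + 2 ∧ F ⊆ franklFamily V k t T by
    obtain ⟨T, hTV, hT, hFT⟩ := this
    exact ⟨T, hTV, hT, hF.eq_franklFamily_of_subset hT.le hFT⟩
  have hsized := sized_slice (𝒜 := tTransversals V k t F) (r := t + 1)
  have hsub : ∀ B ∈ (tTransversals V k t F).slice (t + 1), B ⊆ V := fun B hB ↦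
    mem_powerset.1 (mem_filter.1 (mem_slice.1 hB).1).1
  rcases le_or_gt #V (k + 1) with hV | hV
  · obtain ⟨A, hA, B, hB, hne⟩ := nontrivial_of_forall_cover_lt_card hsized hsub hτ
    have hlt : #A < #(A ∪ B) :=
      card_lt_card_union_of_ne ((hsized hA).trans (hsized hB).symm).le hne
    rw [hsized hA] at hlt
    obtain ⟨T, hTAB, hT⟩ := exists_subset_card_eq (Nat.succ_le_of_lt hlt)
    have hTV : T ⊆ V := hTAB.trans (union_subset (hsub A hA) (hsub B hB))
    exact ⟨T, hTV, hT, hF.1.1.trans (powersetCard_subset_franklFamily hTV (by omega))⟩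
  · obtain ⟨A, hA, B, hB, C, hC, hAB, hCAB, hABC⟩ :=
      exists_subset_union_of_forall_cover_lt_card hsized hsub
        (hF.isIntersectingOf_slice_tTransversals hV) hτ
    exact ⟨A ∪ B, union_subset (hsub A hA) (hsub B hB), hAB,
      subset_franklFamily_of_mem_tTransversals hF.1.1 (slice_subset hA) (slice_subset hB)
        (slice_subset hC) subset_union_left subset_union_right hCAB hABC⟩

theorem stmt16 (n k t : ℕ) (ht : 1 ≤ t) (hk : t < k) (hn : 2 * k ≤ n)
    (F : Finset (Finset ℕ)) (hF : F ⊆ ksets n k) (hFne : F.Nonempty)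
    (hint : tIntersecting t F)
    (hsat : ∀ F' : Finset (Finset ℕ), F ⊆ F' → F' ⊆ ksets n k →
      tIntersecting t F' → F' = F)
    (htau : ∀ T : Finset ℕ, T ⊆ ground n →
      (∀ b ∈ (tbasis n k t F).filter fun b => b.card = t + 1, t ≤ (T ∩ b).card) →
        t + 1 ≤ T.card) :
    ∃ T : Finset ℕ, T ⊆ ground n ∧ T.card = t + 2 ∧
      F = (ksets n k).filter fun A => t + 1 ≤ (A ∩ T).card := by
  exact stmt16_general (isSaturated_of_tIntersecting hk.le hF hint hsat) fun T hT hcov ↦ htau T hT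
    fun b hb ↦ hcov b (mem_slice.2 ((mem_filter.1 hb).imp_left fun h ↦ (mem_filter.1 h).1))
end

section
/- Suppose n ≥ 1 and A ⊆ 2^{[n]} is an antichain. Then |I(A)| < 2^n − (√2)^n, where the inequality is between real numbers. -/
open Finset

/-!
Call a set *missed* if it is not an intersection of two distinct members of `A`. No member `P` of an
antichain lies inside such an intersection, so every set containing a member of `A` is missed.

Every `S ⊆ [n]` is a symmetric difference of two missed sets. Indeed `S = [n] ∆ ([n] \ S)` and `[n]`
is missed. If `[n] \ S` is not, it equals `P ∩ Q` with `P, Q ∈ A`, and then `S = P ∆ (P ∆ S)`, where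
`P ∆ S` contains `Q`. A nonempty `S` thus comes from an unordered pair of distinct missed sets, so
their number `m` satisfies `2 ^ n - 1 ≤ m.choose 2`, whence `√(2 * 2 ^ n) ≤ m` for `n ≥ 1`.
-/

open scoped symmDiff

section DistinctInfs

variable {α : Type*} [DecidableEq α] [SemilatticeInf α] {A : Finset α} {g p x : α}

/-- The family `I(A)` of meets of two distinct members of `A`, in an arbitrary meet-semilattice. For
sets it is `dInt A A`. -/
def distinctInfs (A : Finset α) : Finset α := A.offDiag.image fun p => p.1 ⊓ p.2

lemma mem_distinctInfs : x ∈ distinctInfs A ↔ ∃ p ∈ A, ∃ q ∈ A, p ≠ q ∧ p ⊓ q = x := by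
  simp only [distinctInfs, mem_image, mem_offDiag, Prod.exists]
  tauto

lemma distinctInfs_subset_Iic [LocallyFiniteOrderBot α] (hA : A ⊆ Iic g) :
    distinctInfs A ⊆ Iic g := by
  intro x hx
  obtain ⟨p, hp, q, -, -, rfl⟩ := mem_distinctInfs.1 hx
  exact mem_Iic.2 (inf_le_left.trans (mem_Iic.1 (hA hp)))

lemma notMem_distinctInfs_of_le (hanti : IsAntichain (· ≤ ·) (A : Set α))
    (hp : p ∈ A) (hpx : p ≤ x) : x ∉ distinctInfs A := by
  intro hx
  obtain ⟨a, ha, b, hb, hab, rfl⟩ := mem_distinctInfs.1 hx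
  have hpa : p = a := hanti.eq hp ha (hpx.trans inf_le_left)
  have hpb : p = b := hanti.eq hp hb (hpx.trans inf_le_right)
  exact hab (hpa.symm.trans hpb)

end DistinctInfs

section SymmDiff

variable {α : Type*} [GeneralizedBooleanAlgebra α]

lemma le_symmDiff_iff_le_sup_and_disjoint {x y z : α} :
    x ≤ y ∆ z ↔ x ≤ y ⊔ z ∧ Disjoint x (y ⊓ z) := by
  rw [symmDiff_eq_sup_sdiff_inf, le_sdiff]

lemma le_symmDiff_of_inf_eq_sdiff {g p q s : α} (hq : q ≤ g) (hpq : p ⊓ q = g \ s) :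
    q ≤ p ∆ s := by
  refine le_symmDiff_iff_le_sup_and_disjoint.2 ⟨?_, ?_⟩
  · calc q ≤ g := hq
      _ ≤ g \ s ⊔ s := le_sdiff_sup
      _ ≤ p ⊔ s := sup_le_sup_right (hpq ▸ inf_le_left) s
  · have hdisj : Disjoint (p ⊓ q) s := hpq ▸ disjoint_sdiff_self_left
    rwa [← disjoint_assoc, inf_comm q]

lemma card_le_choose_two_add_one_of_forall_exists_symmDiff {N T : Finset α}
    (h : ∀ s ∈ T, ∃ x ∈ N, ∃ y ∈ N, x ∆ y = s) : #T ≤ (#N).choose 2 + 1 := by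
  classical
  have hsub : T.erase ⊥ ⊆
      (N.offDiag.image Sym2.mk.uncurry).image (Sym2.lift ⟨(· ∆ ·), symmDiff_comm⟩) := by
    intro s hs
    obtain ⟨hs_ne, hsT⟩ := mem_erase.1 hs
    obtain ⟨x, hx, y, hy, rfl⟩ := h s hsT
    have hxy : x ≠ y := fun hxy => hs_ne (symmDiff_eq_bot.2 hxy)
    have hmem : s(x, y) ∈ N.offDiag.image Sym2.mk.uncurry :=
      mem_image.2 ⟨(x, y), mem_offDiag.2 ⟨hx, hy, hxy⟩, rfl⟩
    exact mem_image.2 ⟨s(x, y), hmem, rfl⟩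
  calc #T ≤ #(T.erase ⊥) + 1 := Nat.le_add_of_sub_le pred_card_le_card_erase
    _ ≤ #(N.offDiag.image Sym2.mk.uncurry) + 1 := by grw [hsub, card_image_le]
    _ = (#N).choose 2 + 1 := by rw [Sym2.card_image_offDiag]

end SymmDiff

section Antichain

variable {α : Type*} [DecidableEq α] [GeneralizedBooleanAlgebra α] [LocallyFiniteOrderBot α]
  {A : Finset α} {g : α}

lemma exists_notMem_distinctInfs_symmDiff_eq (hanti : IsAntichain (· ≤ ·) (A : Set α))
    (hA : A ⊆ Iic g) {s : α} (hs : s ≤ g) :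
    ∃ x ∈ Iic g \ distinctInfs A, ∃ y ∈ Iic g \ distinctInfs A, x ∆ y = s := by
  suffices h : ∃ x ≤ g, x ∉ distinctInfs A ∧ x ∆ s ∉ distinctInfs A by
    obtain ⟨x, hxg, hx, hxs⟩ := h
    have hxsg : x ∆ s ≤ g := symmDiff_le_sup.trans (sup_le hxg hs)
    exact ⟨x, mem_sdiff.2 ⟨mem_Iic.2 hxg, hx⟩, x ∆ s, mem_sdiff.2 ⟨mem_Iic.2 hxsg, hxs⟩,
      symmDiff_symmDiff_cancel_left x s⟩
  by_cases hgs : g \ s ∈ distinctInfs A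
  · obtain ⟨p, hp, q, hq, -, hpq⟩ := mem_distinctInfs.1 hgs
    have hqps : q ≤ p ∆ s := le_symmDiff_of_inf_eq_sdiff (mem_Iic.1 (hA hq)) hpq
    exact ⟨p, mem_Iic.1 (hA hp), notMem_distinctInfs_of_le hanti hp le_rfl,
      notMem_distinctInfs_of_le hanti hq hqps⟩
  · have hg : g ∉ distinctInfs A := fun h => by
      obtain ⟨p, hp, -⟩ := mem_distinctInfs.1 h
      exact notMem_distinctInfs_of_le hanti hp (mem_Iic.1 (hA hp)) h
    exact ⟨g, le_rfl, hg, by rwa [symmDiff_of_ge hs]⟩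

lemma card_Iic_le_choose_two_card_sdiff_distinctInfs_add_one
    (hanti : IsAntichain (· ≤ ·) (A : Set α)) (hA : A ⊆ Iic g) :
    #(Iic g) ≤ (#(Iic g \ distinctInfs A)).choose 2 + 1 :=
  card_le_choose_two_add_one_of_forall_exists_symmDiff fun _ hs =>
    exists_notMem_distinctInfs_symmDiff_eq hanti hA (mem_Iic.1 hs)

end Antichain

lemma sqrt_two_mul_le_of_le_choose_two_add_one {k m : ℕ} (hk : 2 ≤ k)
    (h : k ≤ m.choose 2 + 1) : √(2 * k : ℝ) ≤ m := by
  have hm : 2 ≤ m := by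
    by_contra! hlt
    have hchoose := Nat.choose_eq_zero_of_lt hlt
    omega
  have hm' : (2 : ℝ) ≤ m := mod_cast hm
  have h' : (k : ℝ) ≤ m * (m - 1) / 2 + 1 := by
    rw [← Nat.cast_choose_two]
    exact mod_cast h
  refine Real.sqrt_le_iff.2 ⟨m.cast_nonneg, ?_⟩
  linarith

lemma sqrt_two_pow_lt_sqrt_two_mul_two_pow (n : ℕ) : √2 ^ n < √(2 * 2 ^ n : ℝ) := by
  apply Real.lt_sqrt_of_sq_lt
  rw [pow_right_comm, Real.sq_sqrt zero_le_two]
  linarith [pow_pos (zero_lt_two' ℝ) n]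

theorem stmt17_general {α : Type*} [DecidableEq α] [GeneralizedBooleanAlgebra α]
    [LocallyFiniteOrderBot α] {A : Finset α} {g : α} (hg : g ≠ ⊥) (hA : A ⊆ Iic g)
    (hanti : IsAntichain (· ≤ ·) (A : Set α)) :
    (#(distinctInfs A) : ℝ) ≤ #(Iic g) - √(2 * #(Iic g) : ℝ) := by
  have htwo : 2 ≤ #(Iic g) :=
    one_lt_card.2 ⟨g, mem_Iic.2 le_rfl, ⊥, mem_Iic.2 bot_le, hg⟩
  have hsqrt : √(2 * #(Iic g) : ℝ) ≤ #(Iic g \ distinctInfs A) :=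
    sqrt_two_mul_le_of_le_choose_two_add_one htwo
      (card_Iic_le_choose_two_card_sdiff_distinctInfs_add_one hanti hA)
  have hadd : (#(Iic g \ distinctInfs A) : ℝ) + #(distinctInfs A) = #(Iic g) :=
    mod_cast card_sdiff_add_card_eq_card (distinctInfs_subset_Iic hA)
  linarith

lemma dInt_self (A : Finset (Finset ℕ)) : dInt A A = distinctInfs A := by
  ext x
  simp only [dInt, mem_distinctInfs, mem_image, mem_filter, mem_product, Prod.exists, inf_eq_inter]
  tauto

lemma card_Iic_ground (n : ℕ) : #(Iic (ground n)) = 2 ^ n := by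
  rw [card_Iic_finset, ground, Nat.card_Icc, Nat.add_sub_cancel]

theorem stmt17 (n : ℕ) (hn : 1 ≤ n)
    (A : Finset (Finset ℕ)) (hA : A ⊆ (ground n).powerset)
    (hanti : IsAntichain (· ⊆ ·) ((A : Finset (Finset ℕ)) : Set (Finset ℕ))) :
    ((dInt A A).card : ℝ) < 2 ^ n - Real.sqrt 2 ^ n := by
  have hle := stmt17_general (g := ground n) (nonempty_Icc.2 hn).ne_empty
    (Iic_eq_powerset (ground n) ▸ hA) hanti
  rw [← dInt_self, card_Iic_ground, Nat.cast_pow, Nat.cast_ofNat] at hle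
  exact hle.trans_lt (sub_lt_sub_left (sqrt_two_pow_lt_sqrt_two_mul_two_pow n) _)
end

section
/- Let n = 2d with d ≥ 1. Then: (a) for every pair of cross-Sperner families A, B ⊆ 2^{[n]}, |I(A, B)| ≤ 2^n − 2·2^d + 1; and (b) there exist cross-Sperner families A, B ⊆ 2^{[n]} with |I(A, B)| = 2^n − 2·2^d + 1. In other words, m(n) = 2^n − 2·2^{n/2} + 1 for even n. -/
open Finset

/-! Suppose `A` and `B` are nonempty, cross-Sperner and bounded by `u`. Then `A`, `B`, `A ⊼ B` and
`{u}` are pairwise disjoint, so `#(A ⊼ B) + #A + #B + 1 ≤ #(Iic u)`; since `#(A ⊼ B) ≤ #A * #B`,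
the inequality of arithmetic and geometric means turns this into `√#(A ⊼ B) + 1 ≤ √#(Iic u)`.

For disjoint sets `x` and `y` of equal size and `u = x ⊔ y`, where `Iic u` is the grid
`Iic x × Iic y`, equality is attained: the families `{x} × Iio y` and `Iio x × {y}` are
cross-Sperner, and their meets fill `Iio x × Iio y`. -/

section

open scoped FinsetFamily

variable {α : Type*}

/-- Cross-Sperner families in an arbitrary order: no member of one is comparable to a member of the
other. On `Finset ℕ`, ordered by inclusion, this is definitionally `crossSperner`. -/
def IsCrossSperner [LE α] (A B : Finset α) : Prop :=
  ∀ a ∈ A, ∀ b ∈ B, ¬a ≤ b ∧ ¬b ≤ a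

theorem IsCrossSperner.symm [LE α] {A B : Finset α} (h : IsCrossSperner A B) :
    IsCrossSperner B A :=
  fun b hb a ha => (h a ha b hb).symm

theorem IsCrossSperner.disjoint [Preorder α] {A B : Finset α} (h : IsCrossSperner A B) :
    Disjoint A B :=
  disjoint_left.2 fun a ha hb => (h a ha a hb).1 le_rfl

theorem IsCrossSperner.subset_Iio [Preorder α] [LocallyFiniteOrderBot α] {A B : Finset α} {u : α}
    (h : IsCrossSperner A B) (hA : A ⊆ Iic u) (hB : B ⊆ Iic u) (hBne : B.Nonempty) :
    A ⊆ Iio u := by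
  obtain ⟨b, hb⟩ := hBne
  exact fun a ha => mem_Iio.2 <| (mem_Iic.1 (hA ha)).lt_of_not_ge fun hua =>
    (h a ha b hb).2 ((mem_Iic.1 (hB hb)).trans hua)

section SemilatticeInf

variable [SemilatticeInf α] [DecidableEq α] {A B : Finset α} {u : α}

theorem IsCrossSperner.disjoint_infs_left (h : IsCrossSperner A B) : Disjoint (A ⊼ B) A := by
  refine disjoint_left.2 fun c hc hcA => ?_
  obtain ⟨a, -, b, hb, rfl⟩ := mem_infs.1 hc
  exact (h _ hcA b hb).1 inf_le_right

theorem IsCrossSperner.disjoint_infs_right (h : IsCrossSperner A B) : Disjoint (A ⊼ B) B :=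
  infs_comm (s := B) (t := A) ▸ h.symm.disjoint_infs_left

variable [LocallyFiniteOrderBot α]

theorem infs_subset_Iio (hA : A ⊆ Iio u) : A ⊼ B ⊆ Iio u :=
  infs_subset_iff.2 fun _ ha _ _ => mem_Iio.2 (inf_le_left.trans_lt (mem_Iio.1 (hA ha)))

theorem IsCrossSperner.card_infs_add_card_add_card_lt (h : IsCrossSperner A B)
    (hA : A ⊆ Iic u) (hB : B ⊆ Iic u) (hAne : A.Nonempty) (hBne : B.Nonempty) :
    #(A ⊼ B) + #A + #B < #(Iic u) := by
  have hA' : A ⊆ Iio u := h.subset_Iio hA hB hBne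
  have hB' : B ⊆ Iio u := h.symm.subset_Iio hB hA hAne
  calc #(A ⊼ B) + #A + #B = #(A ⊼ B ∪ A ∪ B) := by
        rw [card_union_of_disjoint (disjoint_union_left.2 ⟨h.disjoint_infs_right, h.disjoint⟩),
          card_union_of_disjoint h.disjoint_infs_left]
    _ ≤ #(Iio u) := card_le_card (union_subset (union_subset (infs_subset_Iio hA') hA') hB')
    _ < #(Iic u) := card_lt_card (by simpa [← coe_ssubset] using Set.Iio_ssubset_Iic_self)

theorem IsCrossSperner.sqrt_card_infs_add_one_le (h : IsCrossSperner A B)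
    (hA : A ⊆ Iic u) (hB : B ⊆ Iic u) : √(#(A ⊼ B) : ℝ) + 1 ≤ √(#(Iic u) : ℝ) := by
  rcases A.eq_empty_or_nonempty with rfl | hAne
  · simp
  rcases B.eq_empty_or_nonempty with rfl | hBne
  · simp
  have hgm : √(#(A ⊼ B) : ℝ) ≤ √(#A : ℝ) * √(#B : ℝ) := by
    rw [← Real.sqrt_mul (Nat.cast_nonneg _)]
    exact Real.sqrt_le_sqrt (mod_cast card_infs_le A B)
  have ham : 2 * √(#A : ℝ) * √(#B : ℝ) ≤ #A + #B := by
    simpa only [Real.sq_sqrt (Nat.cast_nonneg _)] using two_mul_le_add_sq √(#A : ℝ) √(#B : ℝ)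
  refine Real.le_sqrt_of_sq_le ?_
  calc (√(#(A ⊼ B) : ℝ) + 1) ^ 2 = #(A ⊼ B) + 2 * √(#(A ⊼ B) : ℝ) + 1 := by
        rw [add_sq, Real.sq_sqrt (Nat.cast_nonneg _), mul_one, one_pow]
    _ ≤ #(A ⊼ B) + #A + #B + 1 := by linarith
    _ ≤ #(Iic u) := mod_cast h.card_infs_add_card_add_card_lt hA hB hAne hBne

theorem IsCrossSperner.card_infs_le_sub_one_sq (h : IsCrossSperner A B)
    (hA : A ⊆ Iic u) (hB : B ⊆ Iic u) {k : ℕ} (hu : #(Iic u) ≤ k ^ 2) :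
    #(A ⊼ B) ≤ (k - 1) ^ 2 := by
  have hsqrt : √(#(A ⊼ B) : ℝ) + 1 ≤ k :=
    (h.sqrt_card_infs_add_one_le hA hB).trans <|
      Real.sqrt_le_iff.2 ⟨Nat.cast_nonneg k, mod_cast hu⟩
  have hk : 1 ≤ k := by
    exact_mod_cast (le_add_of_nonneg_left (Real.sqrt_nonneg _)).trans hsqrt
  rw [← Nat.cast_le (α := ℝ), Nat.cast_pow, Nat.cast_sub hk, Nat.cast_one]
  exact (Real.sqrt_le_left (sub_nonneg.2 (mod_cast hk))).1 (le_sub_iff_add_le.2 hsqrt)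

end SemilatticeInf

section IsModularLattice

variable [Lattice α] [IsModularLattice α] [OrderBot α] {x y p q : α}

theorem sup_inf_eq_left_of_disjoint (hpx : p ≤ x) (hxq : Disjoint x q) : (p ⊔ q) ⊓ x = p := by
  rw [sup_inf_assoc_of_le q hpx, hxq.symm.eq_bot, sup_bot_eq]

theorem sup_inf_sup_eq_sup_of_disjoint (hxy : Disjoint x y) (hpx : p ≤ x) (hqy : q ≤ y) :
    (x ⊔ q) ⊓ (p ⊔ y) = p ⊔ q := by
  rw [inf_comm, sup_inf_assoc_of_le y (hpx.trans le_sup_left), inf_comm, sup_comm x,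
    sup_inf_eq_left_of_disjoint hqy hxy.symm]

variable [DecidableEq α] [LocallyFiniteOrderBot α]

theorem isCrossSperner_singleton_sups_Iio (hxy : Disjoint x y) :
    IsCrossSperner ({x} ⊻ Iio y) (Iio x ⊻ {y}) := by
  simp only [IsCrossSperner, forall_sups_iff, mem_singleton, forall_eq, mem_Iio]
  refine fun q hq p hp => ⟨fun hle => hp.not_ge ?_, fun hle => hq.not_ge ?_⟩
  · exact (le_inf (le_sup_left.trans hle) le_rfl).trans_eq
      (sup_inf_eq_left_of_disjoint hp.le hxy)
  · exact (le_inf (le_sup_right.trans hle) le_rfl).trans_eq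
      (sup_comm x q ▸ sup_inf_eq_left_of_disjoint hq.le hxy.symm)

theorem singleton_sups_Iio_infs (hxy : Disjoint x y) :
    ({x} ⊻ Iio y) ⊼ (Iio x ⊻ {y}) = Iio x ⊻ Iio y := by
  ext c
  simp only [mem_infs, mem_sups, mem_singleton, exists_eq_left, mem_Iio]
  constructor
  · rintro ⟨_, ⟨q, hq, rfl⟩, _, ⟨p, hp, rfl⟩, rfl⟩
    exact ⟨p, hp, q, hq, (sup_inf_sup_eq_sup_of_disjoint hxy hp.le hq.le).symm⟩
  · rintro ⟨p, hp, q, hq, rfl⟩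
    exact ⟨_, ⟨q, hq, rfl⟩, _, ⟨p, hp, rfl⟩, sup_inf_sup_eq_sup_of_disjoint hxy hp.le hq.le⟩

theorem card_Iio_sups_Iio (hxy : Disjoint x y) : #(Iio x ⊻ Iio y) = #(Iio x) * #(Iio y) := by
  refine (card_sups_iff _ _).2 ?_
  rintro ⟨p, q⟩ hpq ⟨p', q'⟩ hpq' (heq : p ⊔ q = p' ⊔ q')
  simp only [coe_Iio, Set.mem_prod, Set.mem_Iio] at hpq hpq'
  have hp : p = p' := by
    rw [← sup_inf_eq_left_of_disjoint hpq.1.le (hxy.mono_right hpq.2.le), heq,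
      sup_inf_eq_left_of_disjoint hpq'.1.le (hxy.mono_right hpq'.2.le)]
  have hq : q = q' := by
    rw [← sup_inf_eq_left_of_disjoint hpq.2.le (hxy.symm.mono_right hpq.1.le), sup_comm, heq,
      sup_comm, sup_inf_eq_left_of_disjoint hpq'.2.le (hxy.symm.mono_right hpq'.1.le)]
  rw [hp, hq]

theorem exists_isCrossSperner_card_infs_eq (hxy : Disjoint x y) :
    ∃ A B : Finset α, A ⊆ Iic (x ⊔ y) ∧ B ⊆ Iic (x ⊔ y) ∧ IsCrossSperner A B ∧
      #(A ⊼ B) = #(Iio x) * #(Iio y) := by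
  refine ⟨{x} ⊻ Iio y, Iio x ⊻ {y}, ?_, ?_, isCrossSperner_singleton_sups_Iio hxy, ?_⟩
  · simp only [sups_subset_iff, mem_singleton, forall_eq, mem_Iio, mem_Iic]
    exact fun q hq => sup_le_sup_left hq.le x
  · simp only [sups_subset_iff, mem_singleton, forall_eq, mem_Iio, mem_Iic]
    exact fun p hp => sup_le_sup_right hp.le y
  · rw [singleton_sups_Iio_infs hxy, card_Iio_sups_Iio hxy]

end IsModularLattice

theorem stmt19_general [DecidableEq α] {S : Finset α} {d : ℕ} (hS : #S = 2 * d) :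
    (∀ A B : Finset (Finset α), A ⊆ S.powerset → B ⊆ S.powerset → IsCrossSperner A B →
      #(A ⊼ B) ≤ (2 ^ d - 1) ^ 2) ∧
    (∃ A B : Finset (Finset α), A ⊆ S.powerset ∧ B ⊆ S.powerset ∧ IsCrossSperner A B ∧
      #(A ⊼ B) = (2 ^ d - 1) ^ 2) := by
  rw [← Iic_eq_powerset]
  constructor
  · intro A B hA hB h
    exact h.card_infs_le_sub_one_sq hA hB (by rw [card_Iic_finset, hS, pow_mul'])
  · obtain ⟨X, Y, rfl, hXY, hcard⟩ := exists_disjoint_union_of_even_card (hS ▸ even_two_mul d)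
    have hX : #X = d := by rw [card_union_of_disjoint hXY] at hS; lia
    have hY : #Y = d := hcard ▸ hX
    simpa only [card_Iio_finset, hX, hY, ← sq, sup_eq_union] using
      exists_isCrossSperner_card_infs_eq hXY

end

theorem two_pow_two_mul_sub_add_one {d : ℕ} (hd : 1 ≤ d) :
    2 ^ (2 * d) - 2 * 2 ^ d + 1 = (2 ^ d - 1) ^ 2 := by
  have hle : 2 * 2 ^ d ≤ 2 ^ (2 * d) := by
    rw [← pow_succ']
    exact Nat.pow_le_pow_right two_pos (by lia)
  zify [hle, Nat.one_le_two_pow (n := d)]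
  ring

theorem stmt19 (d : ℕ) (hd : 1 ≤ d) :
    (∀ A B : Finset (Finset ℕ), A ⊆ (ground (2 * d)).powerset →
      B ⊆ (ground (2 * d)).powerset → crossSperner A B →
      (meet A B).card ≤ 2 ^ (2 * d) - 2 * 2 ^ d + 1) ∧
    (∃ A B : Finset (Finset ℕ), A ⊆ (ground (2 * d)).powerset ∧
      B ⊆ (ground (2 * d)).powerset ∧ crossSperner A B ∧
      (meet A B).card = 2 ^ (2 * d) - 2 * 2 ^ d + 1) := by
  rw [two_pow_two_mul_sub_add_one hd]
  exact stmt19_general (S := ground (2 * d)) (by simp [ground])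
end
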